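/- arXiv:1409.2463 — 11 statements merged into one kernel-verified Lean document; each statement's English description precedes it below -/
import Mathlib

section
/- Let p be an odd prime with p ≠ 5, α a positive integer, and β and γ non-negative integers. Let u and v be coprime integers with v even such that 2^α·5^β·p^γ = v·(v^4 − 10u^2v^2 + 5u^4). Then v^4 − 10u^2v^2 + 5u^4 ≠ 5. -/
/-!
Suppose the quartic form equals `5`. Then `5 ∣ v`; writing `v = 5 * w` gives
`(u ^ 2 - 25 * w ^ 2) ^ 2 = 500 * w ^ 4 + 1`, with `w` even. With `|u ^ 2 - 25 * w ^ 2| = 2 * A + 1`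
this reads `A * (A + 1) = 125 * w ^ 4`, so the coprime factors `A`, `A + 1` are a fourth power and
`125` times a fourth power (`split_125`). Congruences modulo `16` leave only `y ^ 4 = 125 * x ^ 4 + 1`
with `w = ± x * y`, and the value of `u ^ 2` modulo `3` forces `3 ∣ x`.

The equation `b ^ 4 = 125 * a ^ 4 + 1` with `3 ∣ a` has only `a = 0` (`descent`): factoring
`b ^ 4 - 1 = (b ^ 2 - 1) * (b ^ 2 + 1)` and then, in the same way, the resulting `c ^ 4 - 1 = 500 * d ^ 4`
leads, once congruences modulo `3` have removed the other splittings, to a solution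
`e ^ 4 = 125 * f ^ 4 + 1` with `3 ∣ f` and `a = 2 * c * e * f`, so infinite descent applies.
Hence `w = 0` and `v = 0`, which is impossible because `2 ^ α * 5 ^ β * p ^ γ ≠ 0`.
-/

lemma sq_mod_three (x : ℕ) : (x % 3 = 0 ∧ x ^ 2 % 3 = 0) ∨ (x % 3 ≠ 0 ∧ x ^ 2 % 3 = 1) := by
  have : x % 3 = 0 ∨ x % 3 = 1 ∨ x % 3 = 2 := by omega
  rcases this with h | h | h <;> simp [Nat.pow_mod, h]

lemma pow_four_mod_three (x : ℕ) :
    (x % 3 = 0 ∧ x ^ 4 % 3 = 0) ∨ (x % 3 ≠ 0 ∧ x ^ 4 % 3 = 1) := by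
  have : x % 3 = 0 ∨ x % 3 = 1 ∨ x % 3 = 2 := by omega
  rcases this with h | h | h <;> simp [Nat.pow_mod, h]

lemma pow_four_mod_sixteen (x : ℕ) :
    (x % 2 = 0 ∧ x ^ 4 % 16 = 0) ∨ (x % 2 = 1 ∧ x ^ 4 % 16 = 1) := by
  have h16 : x % 16 < 16 := Nat.mod_lt _ (by norm_num)
  have h2 : x % 2 = x % 16 % 2 := by omega
  rw [h2, Nat.pow_mod]
  generalize x % 16 = y at h16
  interval_cases y <;> simp

lemma mod_three_of_mul {x y : ℕ} (h : (x * y) % 3 = 0) : x % 3 = 0 ∨ y % 3 = 0 := by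
  have := (Nat.prime_three.dvd_mul (m := x) (n := y)).1 (Nat.dvd_of_mod_eq_zero h)
  omega

lemma odd_sq_eq {b : ℕ} (h : b % 2 = 1) : ∃ n, b ^ 2 = 8 * n + 1 := by
  obtain ⟨k, hk⟩ : ∃ k, b = 2 * k + 1 := ⟨b / 2, by omega⟩
  obtain ⟨j, hj⟩ := Nat.even_mul_succ_self k
  refine ⟨j, ?_⟩
  rw [hk]
  nlinarith

lemma split_pow_four {m n z : ℕ} (hc : Nat.Coprime m n) (h : m * n = z ^ 4) :
    ∃ x y, m = x ^ 4 ∧ n = y ^ 4 ∧ z = x * y := by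
  obtain ⟨x, hx⟩ := exists_eq_pow_of_mul_eq_pow (Nat.isUnit_iff.2 hc) h
  obtain ⟨y, hy⟩ := exists_eq_pow_of_mul_eq_pow
    (Nat.isUnit_iff.2 hc.symm) ((mul_comm n m).trans h)
  refine ⟨x, y, hx, hy, ?_⟩
  rw [hx, hy, ← mul_pow] at h
  exact (Nat.pow_left_injective (by norm_num : 4 ≠ 0) h).symm

lemma split_125 {m n z : ℕ} (hc : Nat.Coprime m n) (h : m * n = 125 * z ^ 4) :
    (∃ x y, m = 125 * x ^ 4 ∧ n = y ^ 4 ∧ z = x * y) ∨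
    (∃ x y, m = x ^ 4 ∧ n = 125 * y ^ 4 ∧ z = x * y) := by
  have key : 125 ∣ m ∨ 125 ∣ n := by
    have hd : 125 ∣ m * n := ⟨_, h⟩
    by_cases h5 : 5 ∣ m
    · have hn : Nat.Coprime 125 n := by
        have : Nat.Coprime 5 n := Nat.Coprime.coprime_dvd_left h5 hc
        exact Nat.Coprime.pow_left 3 this
      exact Or.inl (hn.dvd_of_dvd_mul_right hd)
    · have hm : Nat.Coprime 125 m :=
        Nat.Coprime.pow_left 3 ((Nat.Prime.coprime_iff_not_dvd Nat.prime_five).2 h5)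
      exact Or.inr (hm.dvd_of_dvd_mul_left hd)
  rcases key with ⟨k, rfl⟩ | ⟨k, rfl⟩
  · left
    obtain ⟨x, y, rfl, hy, hz⟩ := split_pow_four (Nat.Coprime.coprime_mul_left hc)
      (by linarith : k * n = z ^ 4)
    exact ⟨x, y, rfl, hy, hz⟩
  · right
    obtain ⟨x, y, hx, rfl, hz⟩ := split_pow_four (Nat.Coprime.coprime_mul_left_right hc)
      (by linarith : m * k = z ^ 4)
    exact ⟨x, y, hx, rfl, hz⟩

set_option maxHeartbeats 1000000 in
/-- The condition `3 ∣ a` is what discards the unwanted splittings at each step, and it is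
inherited by the smaller solution. -/
lemma descent (a : ℕ) : ∀ b : ℕ, b ^ 4 = 125 * a ^ 4 + 1 → a % 3 = 0 → a = 0 := by
  induction a using Nat.strong_induction_on with
  | _ a ih =>
  intro b hb ha3
  have ha2 : a % 2 = 0 := by
    have := pow_four_mod_sixteen a
    have := pow_four_mod_sixteen b
    omega
  have hb2 : b % 2 = 1 := by
    have := pow_four_mod_sixteen a
    have := pow_four_mod_sixteen b
    omega
  obtain ⟨n, hn⟩ := odd_sq_eq hb2
  obtain ⟨t, rfl⟩ : ∃ t, a = 2 * t := ⟨a / 2, by omega⟩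
  have h1 : n * (4 * n + 1) = 125 * t ^ 4 := by
    have : b ^ 4 = (8 * n + 1) ^ 2 := by rw [← hn]; ring
    nlinarith
  have hco : Nat.Coprime n (4 * n + 1) := by simp
  rcases split_125 hco h1 with ⟨d, c, hd, hc, rfl⟩ | ⟨d, c, hd, hc, rfl⟩
  · have hb3 := sq_mod_three b
    have hc3 := pow_four_mod_three c
    have hd3 := pow_four_mod_three d
    have hdc : d % 3 = 0 ∨ c % 3 = 0 := mod_three_of_mul (by omega)
    have hd0 : d % 3 = 0 := by omega
    have hc2 : c % 2 = 1 := by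
      have := pow_four_mod_sixteen c
      omega
    obtain ⟨k, hk⟩ := odd_sq_eq hc2
    have h2 : (4 * k) * (4 * k + 1) = 125 * d ^ 4 := by
      have : c ^ 4 = (8 * k + 1) ^ 2 := by rw [← hk]; ring
      nlinarith
    have hcs := sq_mod_three c
    rcases split_125 (by simp) h2 with ⟨f, e, hf, he, rfl⟩ | ⟨f, e, hf, he, rfl⟩
    · have he3 := pow_four_mod_three e
      have hf3 := pow_four_mod_three f
      have hfe := mod_three_of_mul hd0
      have hf0 : f % 3 = 0 := by omega
      by_cases hz : f = 0
      · simp [hz]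
      · exfalso
        have hepos : 0 < e := by
          rcases Nat.eq_zero_or_pos e with h0 | h0
          · simp [h0] at he
          · exact h0
        have hcpos : 0 < c := by omega
        have hlt : f < 2 * (f * e * c) := by
          have : f * 1 ≤ f * (e * c) := Nat.mul_le_mul_left _ (Nat.mul_pos hepos hcpos)
          rw [mul_assoc]
          omega
        exact hz (ih f hlt e (by omega) hf0)
    · exfalso
      have he3 := pow_four_mod_three e
      have hf3 := pow_four_mod_three f
      omega
  · exfalso
    have hc3 := pow_four_mod_three c
    have hd3 := pow_four_mod_three d
    have hdc : d % 3 = 0 ∨ c % 3 = 0 := mod_three_of_mul (by omega)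
    omega

/-- For even `w`, the norm-type equation `u ^ 4 - 50 * u ^ 2 * w ^ 2 + 125 * w ^ 4 = 1`
has only the solutions with `w = 0`. -/
lemma quartic_eq_zero (u w : ℤ) (hw : Even w)
    (h : (u ^ 2 - 25 * w ^ 2) ^ 2 = 500 * w ^ 4 + 1) : w = 0 := by
  -- Work with natural numbers `U = |u|` and `W = |w|`.
  obtain ⟨U, hU⟩ : ∃ U : ℕ, u ^ 2 = (U : ℤ) ^ 2 := ⟨u.natAbs, by simp⟩
  obtain ⟨W, hW, hW2⟩ : ∃ W : ℕ, w ^ 2 = (W : ℤ) ^ 2 ∧ W % 2 = 0 :=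
    ⟨w.natAbs, by simp, by rcases hw with ⟨r, rfl⟩; omega⟩
  have hW4 : w ^ 4 = (W : ℤ) ^ 4 := by
    calc w ^ 4 = (w ^ 2) ^ 2 := by ring
      _ = _ := by rw [hW]; ring
  rw [hU, hW, hW4] at h
  suffices hW0 : W = 0 by
    rw [hW0] at hW
    exact pow_eq_zero_iff (two_ne_zero) |>.1 (by simpa using hW)
  obtain ⟨s, hs⟩ : ∃ s, W = 2 * s := ⟨W / 2, by omega⟩
  have hXodd : ((U : ℤ) ^ 2 - 25 * (W : ℤ) ^ 2) % 2 = 1 := by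
    rcases Int.emod_two_eq_zero_or_one ((U : ℤ) ^ 2 - 25 * (W : ℤ) ^ 2) with h0 | h0
    · exfalso
      obtain ⟨q, hq⟩ := Int.dvd_of_emod_eq_zero h0
      rw [hq] at h
      have : 2 * (2 * q ^ 2 - 250 * (W : ℤ) ^ 4) = 1 := by linarith
      omega
    · exact h0
  have hWsq : (W : ℤ) ^ 2 = 4 * (s : ℤ) ^ 2 := by rw [hs]; push_cast; ring
  have hU2 : U % 2 = 1 := by
    rcases Nat.mod_two_eq_zero_or_one U with h0 | h0
    · exfalso
      obtain ⟨q, hq⟩ : ∃ q, U = 2 * q := ⟨U / 2, by omega⟩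
      have : (U : ℤ) ^ 2 = 4 * (q : ℤ) ^ 2 := by rw [hq]; push_cast; ring
      omega
    · exact h0
  obtain ⟨n, hn⟩ := odd_sq_eq hU2
  have hnz : (U : ℤ) ^ 2 = 8 * n + 1 := by exact_mod_cast hn
  -- `|u ^ 2 - 25 * w ^ 2| = 2 * A + 1`; as `u ^ 2 - 25 * w ^ 2 ≡ 1` modulo `4`, the sign
  -- determines the parity of `A`.
  obtain ⟨A, hA⟩ : ∃ A : ℕ,
      ((U : ℤ) ^ 2 - 25 * (W : ℤ) ^ 2 = 2 * A + 1 ∧ A % 2 = 0) ∨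
      ((U : ℤ) ^ 2 - 25 * (W : ℤ) ^ 2 = -(2 * A + 1) ∧ A % 2 = 1) := by
    refine ⟨((U : ℤ) ^ 2 - 25 * (W : ℤ) ^ 2).natAbs / 2, ?_⟩
    omega
  have hprod : A * (A + 1) = 125 * W ^ 4 := by
    have : ((2 * A + 1 : ℤ)) ^ 2 = 500 * (W : ℤ) ^ 4 + 1 := by
      rcases hA with ⟨hA, -⟩ | ⟨hA, -⟩ <;> rw [hA] at h <;> linarith
    have : (A : ℤ) * (A + 1) = 125 * (W : ℤ) ^ 4 := by linarith
    exact_mod_cast this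
  have hUn : A % 2 = 0 → U ^ 2 = 2 * A + 1 + 25 * W ^ 2 := by
    intro hA2
    have : (U : ℤ) ^ 2 = 2 * A + 1 + 25 * (W : ℤ) ^ 2 := by omega
    exact_mod_cast this
  clear hA hnz hn hWsq hXodd h hW4 hU hW
  rcases split_125 (by simp) hprod with ⟨x, y, hx, hy, hxy⟩ | ⟨x, y, hx, hy, hxy⟩
  · clear hprod
    have hA2 : A % 2 = 0 := by
      clear hUn hxy
      rcases pow_four_mod_sixteen x with ⟨-, hx16⟩ | ⟨-, hx16⟩ <;>
        rcases pow_four_mod_sixteen y with ⟨-, hy16⟩ | ⟨-, hy16⟩ <;> omega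
    have hU2 := hUn hA2
    have hyx : y ^ 4 = 125 * x ^ 4 + 1 := by rw [← hx, ← hy]
    have hx0 : x % 3 = 0 := by
      rcases pow_four_mod_three x with ⟨h0, -⟩ | ⟨-, hx3⟩
      · exact h0
      exfalso
      -- If `3 ∤ x` then `3 ∣ y`, so `3 ∣ w` and `u ^ 2 ≡ 2` modulo `3`.
      have hy0 : y % 3 = 0 := by
        rcases pow_four_mod_three y with ⟨h0, -⟩ | ⟨-, hy3⟩
        · exact h0
        · omega
      have hW3 : W ^ 2 % 3 = 0 := by
        rw [hxy, Nat.pow_mod, Nat.mul_mod, hy0]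
        simp
      rcases sq_mod_three U with ⟨-, hU3⟩ | ⟨-, hU3⟩ <;> omega
    simp [hxy, descent x y hyx hx0]
  · exfalso
    clear hprod hUn hxy
    rcases pow_four_mod_sixteen x with ⟨-, hx16⟩ | ⟨-, hx16⟩ <;>
      rcases pow_four_mod_sixteen y with ⟨-, hy16⟩ | ⟨-, hy16⟩ <;> omega

theorem stmt_1 (p : ℤ) (hp : Prime p) (hodd : Odd p) (hp5 : p ≠ 5)
    (α β γ : ℕ) (hα : 1 ≤ α) (u v : ℤ) (huv : IsCoprime u v) (hv : Even v)
    (h : 2 ^ α * 5 ^ β * p ^ γ = v * (v ^ 4 - 10 * u ^ 2 * v ^ 2 + 5 * u ^ 4)) :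
    v ^ 4 - 10 * u ^ 2 * v ^ 2 + 5 * u ^ 4 ≠ 5 := by
  intro h5
  have hv0 : v ≠ 0 := by
    rintro rfl
    have : (2 : ℤ) ^ α * 5 ^ β * p ^ γ ≠ 0 :=
      mul_ne_zero (by positivity) (pow_ne_zero _ hp.ne_zero)
    exact this (by simpa using h)
  have hdvd : (5 : ℤ) ∣ v := by
    have hp5' : Prime (5 : ℤ) := Int.prime_iff_natAbs_prime.2 (by norm_num)
    apply hp5'.dvd_of_dvd_pow (n := 4)
    exact ⟨1 + 2 * u ^ 2 * v ^ 2 - u ^ 4, by linarith⟩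
  obtain ⟨w, rfl⟩ := hdvd
  have hw : Even w := by
    rcases Int.even_mul.1 hv with h' | h'
    · exact absurd h' (by decide)
    · exact h'
  have := quartic_eq_zero u w hw (by linarith)
  exact hv0 (by simp [this])
end

section
/- Let a, b, z be integers with a odd, b even and nonzero, gcd(a,b) = 1, and a^2 + b^2 = z^5. Then there exist coprime integers u and v of opposite parity (u odd, v even) such that a = u·(u^4 − 10u^2v^2 + 5v^4), b = v·(v^4 − 10u^2v^2 + 5u^4), and z = u^2 + v^2. -/
/-!
Work in the Gaussian integers, a principal ideal domain, where `(a + bi)(a - bi) = z ^ 5`. Since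
`a` and `b` are coprime and `a ^ 2 + b ^ 2` is odd, the two factors are coprime, so `a + bi` is a
unit times a fifth power. Every unit `e` satisfies `e ^ 4 = 1`, hence is its own fifth power, and
`a + bi = (u + vi) ^ 5`. Comparing real and imaginary parts gives the formulas for `a` and `b`;
comparing norms gives `z`, and coprimality and parity of `u`, `v` are inherited from `a`, `b`.
-/

lemma gaussianInt_isUnit_pow_five {e : GaussianInt} (he : IsUnit e) : e ^ 5 = e := by
  have hn : e.norm = 1 := (Zsqrtd.norm_eq_one_iff' (by norm_num) e).2 he
  obtain ⟨x, y⟩ := e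
  have h1 : x * x + y * y = 1 := by
    simp only [Zsqrtd.norm] at hn
    linarith
  have hx1 : x ≤ 1 := by nlinarith
  have hx2 : -1 ≤ x := by nlinarith
  have hy1 : y ≤ 1 := by nlinarith
  have hy2 : -1 ≤ y := by nlinarith
  interval_cases x <;> interval_cases y <;> first | omega | decide

lemma gaussianInt_isCoprime_conj {a b : ℤ} (ha : Odd a) (hb : Even b) (hab : IsCoprime a b) :
    IsCoprime (⟨a, b⟩ : GaussianInt) ⟨a, -b⟩ := by
  obtain ⟨x, y, hxy⟩ := hab
  obtain ⟨k, hk⟩ : Odd (a ^ 2 + b ^ 2) := ha.pow.add_even (hb.pow_of_ne_zero two_ne_zero)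
  -- With `w = a + bi`, coprimality gives `2 = x (w + w̄) - y i (w - w̄)`, and
  -- `1 = w w̄ - 2 k` since the norm is `2 k + 1`.
  refine ⟨⟨a - k * x, -b + k * y⟩, ⟨-k * x, -k * y⟩, ?_⟩
  ext
  · simp only [Zsqrtd.re_add, Zsqrtd.re_mul, Zsqrtd.re_one]
    linear_combination hk - 2 * k * hxy
  · simp only [Zsqrtd.im_add, Zsqrtd.im_mul, Zsqrtd.im_one]
    ring

theorem stmt_3 (a b z : ℤ) (ha : Odd a) (hb : Even b) (hb0 : b ≠ 0)
    (hab : IsCoprime a b) (h : a ^ 2 + b ^ 2 = z ^ 5) :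
    ∃ u v : ℤ, IsCoprime u v ∧ Odd u ∧ Even v ∧
      a = u * (u ^ 4 - 10 * u ^ 2 * v ^ 2 + 5 * v ^ 4) ∧
      b = v * (v ^ 4 - 10 * u ^ 2 * v ^ 2 + 5 * u ^ 4) ∧
      z = u ^ 2 + v ^ 2 := by
  have hmul : (⟨a, b⟩ : GaussianInt) * ⟨a, -b⟩ = (z : GaussianInt) ^ 5 := by
    rw [← Int.cast_pow, ← h]
    ext
    · simp only [Zsqrtd.re_mul, Zsqrtd.re_intCast]
      ring
    · simp only [Zsqrtd.im_mul, Zsqrtd.im_intCast]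
      ring
  obtain ⟨d, e, hde⟩ :=
    exists_associated_pow_of_mul_eq_pow' (gaussianInt_isCoprime_conj ha hb hab) hmul
  obtain ⟨⟨u, v⟩, huv⟩ : ∃ w : GaussianInt, w ^ 5 = ⟨a, b⟩ :=
    ⟨d * e, by rw [mul_pow, gaussianInt_isUnit_pow_five e.isUnit, hde]⟩
  have hA : a = u * (u ^ 4 - 10 * u ^ 2 * v ^ 2 + 5 * v ^ 4) := by
    have := congrArg Zsqrtd.re huv
    simp only [pow_succ, pow_zero, one_mul, Zsqrtd.re_mul, Zsqrtd.im_mul] at this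
    linear_combination -this
  have hB : b = v * (v ^ 4 - 10 * u ^ 2 * v ^ 2 + 5 * u ^ 4) := by
    have := congrArg Zsqrtd.im huv
    simp only [pow_succ, pow_zero, one_mul, Zsqrtd.re_mul, Zsqrtd.im_mul] at this
    linear_combination -this
  have hu : Odd u := by
    rw [hA] at ha
    exact (Int.odd_mul.1 ha).1
  have hv : Even v := by
    rw [hA] at ha
    have h2 := (Int.odd_mul.1 ha).2
    by_contra hv
    rw [Int.not_even_iff_odd] at hv
    -- For `u`, `v` both odd, the second factor of `a` would be even.
    have h3 : Even (u ^ 4 + 5 * v ^ 4 - 10 * u ^ 2 * v ^ 2) :=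
      (hu.pow.add_odd ((by decide : Odd (5 : ℤ)).mul hv.pow)).sub
        (((by decide : Even (10 : ℤ)).mul_right _).mul_right _)
    rw [← Int.not_odd_iff_even] at h3
    exact h3 (by convert h2 using 1; ring)
  refine ⟨u, v, ?_, hu, hv, hA, hB, ?_⟩
  · exact (hab.of_isCoprime_of_dvd_left ⟨_, hA⟩).of_isCoprime_of_dvd_right ⟨_, hB⟩
  · have h5 : z ^ 5 = (u ^ 2 + v ^ 2) ^ 5 := by
      rw [← h, hA, hB]
      ring
    exact (Odd.strictMono_pow (by decide : Odd 5)).injective h5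
end

section
/- Let p be an odd prime, α a positive integer, and β and γ non-negative integers. Then there are no positive integers x and z with gcd(x, z) = 1 satisfying x^{10} + 2^{2α}·5^{2β}·p^{2γ} = z^5. -/
/-!
Put `D = 2^α 5^β p^γ`, so that `(x^5)^2 + D^2 = z^5`; one may assume `p ≠ ±5`. Two factorizations
of this equation are compared.

* In `ℤ[i]` the factors `x^5 ± D i` are coprime, hence fifth powers (all units are fifth powers):
  there are coprime `a`, `b` with `z = a^2 + b^2`, `x^5 = a (a^4 - 10 a^2 b^2 + 5 b^4)` and
  `D = b Q`, where `Q = 5 a^4 - 10 a^2 b^2 + b^4` (`exists_gaussian_root`). Here `b` is even.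
* In `ℤ`, `D^2 = T S` with `T = z - x^2` and `S = z^4 + z^3 x^2 + z^2 x^4 + z x^6 + x^8`.

Both `Q` and `S` are odd, not divisible by `25`, and share no prime other than `5` with their
cofactors. Hence, up to sign, `Q` is one of `1, 5, p^γ, 5 p^γ` and `S` is one of
`1, 5, p^(2γ), 5 p^(2γ)` (`sq_eq_of_mul_eq`). Size considerations (`S > z^4 ≥ b^8`) exclude the
values `1` and `5` in both cases, and since `5 ∣ S ↔ 5 ∣ D ↔ 5 ∣ Q` there remain `T = b^2` and
`T = 5 b^2`. In the first case `a^2 = x^2`, which is impossible as `x` is odd and `b` even. In the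
second case `a^2 = x^2 + 4 b^2`, so `a` is prime to `x` although it divides `x^5`; thus `a = ±1`, which is
absurd.
-/

/-- A divisor `M` of `2^a 5^b p^c` prime to `10` and sharing no factor `p` with its cofactor
is `±1` or `±p^c`; squares absorb the sign. -/
lemma sq_eq_of_mul_eq_of_not_five_dvd {p M N : ℤ} {a b c : ℕ} (hp : Prime p)
    (h : M * N = 2 ^ a * 5 ^ b * p ^ c) (h2 : ¬ 2 ∣ M) (h5 : ¬ 5 ∣ M)
    (hc : p ∣ M → ¬ p ∣ N) : M ^ 2 = 1 ∨ M ^ 2 = (p ^ c) ^ 2 := by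
  have c2 : IsCoprime M (2 ^ a) :=
    (((Int.prime_two.coprime_iff_not_dvd).2 h2).symm).pow_right
  have c5 : IsCoprime M (5 ^ b) :=
    ((((by norm_num : Prime (5 : ℤ)).coprime_iff_not_dvd).2 h5).symm).pow_right
  have hM : M ∣ p ^ c := by
    have h1 : M ∣ 2 ^ a * 5 ^ b * p ^ c := ⟨N, h.symm⟩
    exact (c2.mul_right c5).dvd_of_dvd_mul_left h1
  by_cases hpM : p ∣ M
  · right
    have hN : IsCoprime (p ^ c) N := ((hp.coprime_iff_not_dvd).2 (hc hpM)).pow_left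
    have h1 : p ^ c ∣ M := hN.dvd_of_dvd_mul_right (h ▸ Dvd.intro_left _ rfl)
    rw [← Int.natAbs_eq_iff_sq_eq]
    exact Nat.dvd_antisymm (Int.natAbs_dvd_natAbs.2 hM) (Int.natAbs_dvd_natAbs.2 h1)
  · left
    have h1 : IsCoprime M (p ^ c) := ((hp.coprime_iff_not_dvd).2 hpM).symm.pow_right
    have h3 : IsUnit M := h1.isUnit_of_dvd' dvd_rfl hM
    rcases Int.isUnit_iff.1 h3 with h | h <;> simp [h]

/-- The variant of `sq_eq_of_mul_eq_of_not_five_dvd` allowing a single factor `5` in `M`. -/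
lemma sq_eq_of_mul_eq {p M N : ℤ} {a b c : ℕ} (hp : Prime p) (hp5 : ¬ p ∣ 5)
    (h : M * N = 2 ^ a * 5 ^ b * p ^ c) (h2 : ¬ 2 ∣ M) (h25 : ¬ 25 ∣ M)
    (hc : p ∣ M → ¬ p ∣ N) :
    (M ^ 2 = 1 ∨ M ^ 2 = 25) ∨ M ^ 2 = (p ^ c) ^ 2 ∨ M ^ 2 = 25 * (p ^ c) ^ 2 := by
  by_cases h5 : (5 : ℤ) ∣ M
  · obtain ⟨M', rfl⟩ := h5
    have key := sq_eq_of_mul_eq_of_not_five_dvd (M := M') (N := 5 * N) (a := a) (b := b) (c := c) hp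
      (by rw [← h]; ring) (fun h => h2 (h.mul_left 5))
      (fun ⟨k, hk⟩ => h25 ⟨k, by rw [hk]; ring⟩)
      (fun h1 h3 => (hp.dvd_or_dvd h3).elim hp5 (hc (h1.mul_left 5)))
    rcases key with key | key
    · left; right; linear_combination 25 * key
    · right; right; linear_combination 25 * key
  · rcases sq_eq_of_mul_eq_of_not_five_dvd hp h h2 h5 hc with key | key
    · exact Or.inl (Or.inl key)
    · exact Or.inr (Or.inl key)

/-- Every unit `u` of `ℤ[i]` satisfies `u^4 = 1`, so it is its own fifth power. -/
lemma gaussian_unit_pow_five (u : GaussianInt) (hu : IsUnit u) : u ^ 5 = u := by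
  have h1 : u.norm = 1 := (Zsqrtd.norm_eq_one_iff' (by norm_num) u).2 hu
  obtain ⟨r, s⟩ := u
  simp only [Zsqrtd.norm_def] at h1
  have hr : r ≤ 1 := by nlinarith [mul_self_nonneg s]
  have hr' : -1 ≤ r := by nlinarith [mul_self_nonneg s]
  have hs : s ≤ 1 := by nlinarith [mul_self_nonneg r]
  have hs' : -1 ≤ s := by nlinarith [mul_self_nonneg r]
  interval_cases r <;> interval_cases s <;> first | (exfalso; omega) | decide

/-- If `X^2 + D^2` is a fifth power prime to `2 X`, then `X + D i` is a fifth power in `ℤ[i]`. -/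
lemma exists_gaussian_root {X D z : ℤ} (hX : IsCoprime (2 * X) (z ^ 5))
    (h : X ^ 2 + D ^ 2 = z ^ 5) :
    ∃ a b : ℤ, X = a * (a ^ 4 - 10 * a ^ 2 * b ^ 2 + 5 * b ^ 4) ∧
      D = b * (5 * a ^ 4 - 10 * a ^ 2 * b ^ 2 + b ^ 4) ∧ z = a ^ 2 + b ^ 2 := by
  have hprod : (⟨X, D⟩ : GaussianInt) * ⟨X, -D⟩ = (z : GaussianInt) ^ 5 := by
    rw [← Int.cast_pow, ← h]
    ext
    · rw [Zsqrtd.re_intCast, Zsqrtd.re_mul]; ring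
    · rw [Zsqrtd.im_intCast, Zsqrtd.im_mul]; ring
  have hcop : IsCoprime (⟨X, D⟩ : GaussianInt) ⟨X, -D⟩ := by
    obtain ⟨r, s, hrs⟩ := hX
    -- `2 X` is the sum and `z^5` the product of the two conjugates.
    refine ⟨r + s * ⟨X, -D⟩, r, ?_⟩
    have hsum : (⟨X, D⟩ : GaussianInt) + ⟨X, -D⟩ = ((2 * X : ℤ) : GaussianInt) := by
      ext
      · simp; ring
      · simp
    have hrs' : (r : GaussianInt) * ((2 * X : ℤ) : GaussianInt) + s * (z : GaussianInt) ^ 5 = 1 := by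
      exact_mod_cast congrArg (Int.cast : ℤ → GaussianInt) hrs
    rw [← hsum, ← hprod] at hrs'
    linear_combination hrs'
  obtain ⟨d, u, hu⟩ := exists_associated_pow_of_mul_eq_pow' hcop hprod
  rw [← gaussian_unit_pow_five u u.isUnit, ← mul_pow] at hu
  obtain ⟨a, b, hab⟩ : ∃ a b : ℤ, d * (u : GaussianInt) = ⟨a, b⟩ := ⟨_, _, rfl⟩
  rw [hab] at hu
  have hre := congrArg Zsqrtd.re hu
  have him := congrArg Zsqrtd.im hu
  simp [pow_succ] at hre him
  have h1 : X = a * (a ^ 4 - 10 * a ^ 2 * b ^ 2 + 5 * b ^ 4) := by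
    rw [← hre]; ring
  have h2 : D = b * (5 * a ^ 4 - 10 * a ^ 2 * b ^ 2 + b ^ 4) := by
    rw [← him]; ring
  refine ⟨a, b, h1, h2, ?_⟩
  have h5 : z ^ 5 = (a ^ 2 + b ^ 2) ^ 5 := by rw [← h, h1, h2]; ring
  exact (Odd.strictMono_pow (by decide : Odd 5)).injective h5

/-- The theorem for `p ≠ ±5`, by comparing the factorizations of `D` and `D^2`. -/
lemma no_solution_of_not_dvd_five (p : ℤ) (hp : Prime p) (hp5 : ¬ p ∣ 5)
    (α β γ : ℕ) (hα : 1 ≤ α) (x z : ℤ) (hx : 0 < x) (hz : 0 < z) (hxz : IsCoprime x z)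
    (h : x ^ 10 + (2 ^ α * 5 ^ β * p ^ γ) ^ 2 = z ^ 5) : False := by
  have p5 : Prime (5 : ℤ) := by norm_num
  have hD0 : (2 ^ α * 5 ^ β * p ^ γ : ℤ) ≠ 0 := by
    have := hp.ne_zero
    positivity
  have hD2 : (2 : ℤ) ∣ 2 ^ α * 5 ^ β * p ^ γ :=
    ((dvd_pow_self 2 (by omega)).mul_right _).mul_right _
  -- A variable `D` keeps the tactics from expanding the product of powers.
  obtain ⟨D, hD⟩ : ∃ D : ℤ, D = 2 ^ α * 5 ^ β * p ^ γ := ⟨_, rfl⟩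
  rw [← hD] at h hD0 hD2
  have nocommon : ∀ q : ℤ, Prime q → q ∣ x → q ∣ z → False := fun q hq h1 h2 =>
    hq.not_isUnit (hxz.isUnit_of_dvd' h1 h2)
  have hxodd : ¬ 2 ∣ x := by
    intro h1
    refine nocommon 2 Int.prime_two h1 (Int.prime_two.dvd_of_dvd_pow (n := 5) ?_)
    rw [← h]
    exact dvd_add (dvd_pow h1 (by norm_num)) (dvd_pow hD2 (by norm_num))
  have hzodd : ¬ 2 ∣ z := by
    intro h1
    refine hxodd (Int.prime_two.dvd_of_dvd_pow (n := 10) ?_)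
    rw [eq_sub_of_add_eq h]
    exact dvd_sub (dvd_pow h1 (by norm_num)) (dvd_pow hD2 (by norm_num))
  have hcop : IsCoprime (2 * x ^ 5) (z ^ 5) :=
    (((Int.prime_two.coprime_iff_not_dvd).2 hzodd).mul_left hxz.pow_left).pow_right
  obtain ⟨a, b, hX, hDb, hzab⟩ := exists_gaussian_root hcop (D := D) (by rw [← h]; ring)
  obtain ⟨Q, hQ⟩ : ∃ Q : ℤ, Q = 5 * a ^ 4 - 10 * a ^ 2 * b ^ 2 + b ^ 4 := ⟨_, rfl⟩
  obtain ⟨T, hT⟩ : ∃ T : ℤ, T = z - x ^ 2 := ⟨_, rfl⟩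
  obtain ⟨S, hS⟩ : ∃ S : ℤ, S = z ^ 4 + z ^ 3 * x ^ 2 + z ^ 2 * x ^ 4 + z * x ^ 6 + x ^ 8 :=
    ⟨_, rfl⟩
  have hS' : S = T * (T ^ 3 + 5 * T ^ 2 * x ^ 2 + 10 * T * x ^ 4 + 10 * x ^ 6) + 5 * x ^ 8 := by
    rw [hS, hT]; ring
  rw [← hQ] at hDb
  have hTS : S * T = D ^ 2 := by rw [hS, hT]; linear_combination -h
  have ncab : ∀ q : ℤ, Prime q → q ∣ a → q ∣ b → False := by
    intro q hq h1 h2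
    refine nocommon q hq (hq.dvd_of_dvd_pow (n := 5) ?_) ?_
    · rw [hX]; exact h1.mul_right _
    · rw [hzab]; exact dvd_add (dvd_pow h1 (by norm_num)) (dvd_pow h2 (by norm_num))
  have haodd : ¬ 2 ∣ a := by
    intro h1
    apply hxodd
    refine Int.prime_two.dvd_of_dvd_pow (n := 5) ?_
    rw [hX]; exact h1.mul_right _
  have hb2 : 2 ∣ b := by
    by_contra h1
    apply hzodd
    rw [hzab]
    have h3 : Odd a := Int.not_even_iff_odd.1 (fun h => haodd h.two_dvd)
    have h4 : Odd b := Int.not_even_iff_odd.1 (fun h => h1 h.two_dvd)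
    exact (h3.pow.add_odd h4.pow).two_dvd
  have hb0 : b ≠ 0 := by rintro rfl; simp at hDb; exact hD0 hDb
  have hb4 : 4 ≤ b ^ 2 := by
    obtain ⟨k, rfl⟩ := hb2
    have : k ≠ 0 := by rintro rfl; simp at hb0
    have : 0 < k ^ 2 := by positivity
    nlinarith
  -- The conditions needed to read off `Q` from `Q * b = D`.
  have hQ2 : ¬ 2 ∣ Q := by
    intro h1
    have h3 : (2 : ℤ) ∣ 5 * a ^ 4 := by
      have e : 5 * a ^ 4 = Q - b * (b ^ 3 - 10 * a ^ 2 * b) := by rw [hQ]; ring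
      rw [e]; exact dvd_sub h1 (hb2.mul_right _)
    rcases Int.prime_two.dvd_or_dvd h3 with h4 | h4
    · norm_num at h4
    · exact haodd (Int.prime_two.dvd_of_dvd_pow h4)
  have hQb5 : 5 ∣ Q ↔ 5 ∣ b := by
    constructor
    · intro h1
      refine p5.dvd_of_dvd_pow (n := 4) ?_
      have e : b ^ 4 = Q - 5 * (a ^ 4 - 2 * a ^ 2 * b ^ 2) := by rw [hQ]; ring
      rw [e]; exact dvd_sub h1 (Dvd.intro _ rfl)
    · intro h1
      have e : Q = b * b ^ 3 + 5 * (a ^ 4 - 2 * a ^ 2 * b ^ 2) := by rw [hQ]; ring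
      rw [e]; exact dvd_add (h1.mul_right _) (Dvd.intro _ rfl)
  have hQ25 : ¬ 25 ∣ Q := by
    intro h1
    have h3 : 5 ∣ b := hQb5.1 (dvd_trans (by norm_num) h1)
    refine ncab 5 p5 (p5.dvd_of_dvd_pow (n := 4) ?_) h3
    obtain ⟨k, hk⟩ := h1
    obtain ⟨l, rfl⟩ := h3
    exact ⟨k + 10 * a ^ 2 * l ^ 2 - 25 * l ^ 4, by linarith⟩
  have hQp : p ∣ Q → ¬ p ∣ b := by
    intro h1 h3
    have h4 : p ∣ 5 * a ^ 4 := by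
      have e : 5 * a ^ 4 = Q - b * (b ^ 3 - 10 * a ^ 2 * b) := by rw [hQ]; ring
      rw [e]; exact dvd_sub h1 (h3.mul_right _)
    rcases hp.dvd_or_dvd h4 with h5 | h5
    · exact hp5 h5
    · exact ncab p hp (hp.dvd_of_dvd_pow h5) h3
  -- The conditions needed to read off `S` from `S * T = D ^ 2`.
  have hS2 : ¬ 2 ∣ S := by
    intro h1
    have hx' : Odd x := Int.not_even_iff_odd.1 (fun h => hxodd h.two_dvd)
    have hz' : Odd z := Int.not_even_iff_odd.1 (fun h => hzodd h.two_dvd)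
    have : Odd S := by
      rw [hS]
      exact (((hz'.pow.add_odd (hz'.pow.mul hx'.pow)).add_odd
        (hz'.pow.mul hx'.pow)).add_odd (hz'.mul hx'.pow)).add_odd hx'.pow
    exact Int.not_even_iff_odd.2 this (even_iff_two_dvd.2 h1)
  have nTx : ∀ q : ℤ, Prime q → q ∣ T → q ∣ x → False := by
    intro q hq h1 h3
    refine nocommon q hq h3 ?_
    have e : z = T + x * x := by rw [hT]; ring
    rw [e]; exact dvd_add h1 (h3.mul_right _)
  have hST5 : 5 ∣ S ↔ 5 ∣ T := by
    constructor
    · intro h1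
      refine p5.dvd_of_dvd_pow (n := 4) ?_
      have e : T ^ 4 = S - 5 * (T ^ 3 * x ^ 2 + 2 * T ^ 2 * x ^ 4 + 2 * T * x ^ 6 + x ^ 8) := by
        rw [hS']; ring
      rw [e]; exact dvd_sub h1 (Dvd.intro _ rfl)
    · intro h1
      rw [hS']; exact dvd_add (h1.mul_right _) (Dvd.intro _ rfl)
  have hS25 : ¬ 25 ∣ S := by
    intro h1
    have h3 : 5 ∣ T := hST5.1 (dvd_trans (by norm_num) h1)
    refine nTx 5 p5 h3 (p5.dvd_of_dvd_pow (n := 8) ?_)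
    obtain ⟨k, hk⟩ := h1
    obtain ⟨l, hl⟩ := h3
    rw [hl, hk] at hS'
    exact ⟨k - l * (25 * l ^ 3 + 25 * l ^ 2 * x ^ 2 + 10 * l * x ^ 4 + 2 * x ^ 6),
      by linarith⟩
  have hSp : p ∣ S → ¬ p ∣ T := by
    intro h1 h3
    have h4 : p ∣ 5 * x ^ 8 := by
      rw [← sub_eq_of_eq_add' hS']
      exact dvd_sub h1 (h3.mul_right _)
    rcases hp.dvd_or_dvd h4 with h5 | h5
    · exact hp5 h5
    · exact nTx p hp h3 (hp.dvd_of_dvd_pow h5)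
  have hSpos : 0 < S := by rw [hS]; positivity
  have hTpos : 0 < T := by
    have : 0 < S * T := by rw [hTS]; positivity
    exact pos_of_mul_pos_right this hSpos.le
  have hzb : b ^ 2 ≤ z := by rw [hzab]; nlinarith [sq_nonneg a]
  have hSz : b ^ 8 < S := by
    have h1 : (b ^ 2) ^ 4 ≤ z ^ 4 := by gcongr
    have h3 : z ^ 4 < S := by
      rw [hS]
      have : 0 < z ^ 3 * x ^ 2 + z ^ 2 * x ^ 4 + z * x ^ 6 + x ^ 8 := by positivity
      linarith
    calc b ^ 8 = (b ^ 2) ^ 4 := by ring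
      _ < S := lt_of_le_of_lt h1 h3
  have hb8 : 64 * b ^ 2 ≤ b ^ 8 := by
    have h1 : 4 ^ 3 ≤ (b ^ 2) ^ 3 := by gcongr
    nlinarith
  have hTSQ : S * T = b ^ 2 * Q ^ 2 := by rw [hTS, hDb]; ring
  have hSle : S ≤ S * T := le_mul_of_one_le_right hSpos.le hTpos
  have hq0 : (p ^ γ) ^ 2 ≠ 0 := by
    have := hp.ne_zero
    positivity
  have hq5 : ¬ 5 ∣ (p ^ γ) ^ 2 := by
    intro h1
    have h3 := p5.dvd_of_dvd_pow (p5.dvd_of_dvd_pow h1)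
    exact hp5 ((p5.dvd_prime_iff_associated hp).1 h3).symm.dvd
  have h1 := sq_eq_of_mul_eq (M := Q) (N := b) hp hp5 (by rw [← hD, hDb]; ring) hQ2 hQ25 hQp
  have h3 := sq_eq_of_mul_eq (M := S) (N := T) (a := 2 * α) (b := 2 * β) (c := 2 * γ) hp hp5
    (by rw [hTS, hD]; ring) hS2 hS25 hSp
  have hpow : (p ^ (2 * γ)) ^ 2 = ((p ^ γ) ^ 2) ^ 2 := by ring
  rw [hpow] at h3
  generalize hq : (p ^ γ) ^ 2 = q at *
  have hqpos : 0 < q := by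
    rw [← hq]; exact lt_of_le_of_ne (sq_nonneg _) (by rw [hq]; exact hq0.symm)
  have h1' : Q ^ 2 = q ∨ Q ^ 2 = 25 * q := by
    rcases h1 with (h1 | h1) | h1
    · rw [h1] at hTSQ; linarith
    · rw [h1] at hTSQ; linarith
    · exact h1
  have h3' : S = q ∨ S = 5 * q := by
    rcases h3 with (h3 | h3) | h3 | h3
    · have : 5 * 5 < S * S := by gcongr <;> linarith
      linarith
    · have : 5 * 5 < S * S := by gcongr <;> linarith
      linarith
    · left; exact (sq_eq_sq₀ hSpos.le hqpos.le).1 h3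
    · right
      refine (sq_eq_sq₀ hSpos.le (by positivity)).1 ?_
      rw [h3]; ring
  have hfin : T = b ^ 2 ∨ T = 5 * b ^ 2 := by
    rcases h1' with h1 | h1 <;> rcases h3' with h3 | h3 <;> rw [h1, h3] at hTSQ
    · left; apply mul_left_cancel₀ hq0; linarith
    · exfalso
      have e : 5 * T = b ^ 2 := by apply mul_left_cancel₀ hq0; linarith
      have h5b : 5 ∣ b := p5.dvd_of_dvd_pow (n := 2) ⟨T, e.symm⟩
      exact hq5 (h1 ▸ dvd_pow (hQb5.2 h5b) (by norm_num))
    · exfalso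
      have e : T = 25 * b ^ 2 := by apply mul_left_cancel₀ hq0; linarith
      have h5T : 5 ∣ T := ⟨5 * b ^ 2, by rw [e]; ring⟩
      exact hq5 (h3 ▸ hST5.2 h5T)
    · right; apply mul_left_cancel₀ hq0; linarith
  rcases hfin with hfin | hfin
  · have hax : (a - x) * (a + x) = 0 := by linear_combination hfin - hT - hzab
    have hx4 : x ^ 2 % 4 = 1 := by
      rcases Int.emod_two_eq_zero_or_one x with h | h
      · exact absurd (Int.dvd_of_emod_eq_zero h) hxodd
      · exact Int.sq_mod_four_eq_one_of_odd (Int.odd_iff.2 h)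
    obtain ⟨k, rfl⟩ := hb2
    rcases mul_eq_zero.1 hax with h' | h'
    · obtain rfl : a = x := by linarith
      have e : (a * 40 * k ^ 2) * (2 * k ^ 2 - a ^ 2) = 0 := by linear_combination -hX
      have hk : k ≠ 0 := by rintro rfl; simp at hb0
      have e2 := (mul_eq_zero.1 e).resolve_left (by positivity)
      omega
    · obtain rfl : a = -x := by linarith
      have e : (2 * x) * (x ^ 4 - 20 * x ^ 2 * k ^ 2 + 40 * k ^ 4) = 0 := by
        linear_combination hX
      have e2 := (mul_eq_zero.1 e).resolve_left (by positivity)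
      have h4 : (2 : ℤ) ∣ x ^ 4 := ⟨10 * x ^ 2 * k ^ 2 - 20 * k ^ 4, by linarith⟩
      exact hxodd (Int.prime_two.dvd_of_dvd_pow h4)
  · have e : 2 ^ 2 * b ^ 2 + x * (x * 1) = a * a := by linear_combination hT - hfin + hzab
    have hax5 : a ∣ x ^ 5 := ⟨_, hX⟩
    have cab : IsCoprime a x := by
      rw [Int.isCoprime_iff_gcd_eq_one]
      by_contra hne
      obtain ⟨r, hr, hrd⟩ := Nat.exists_prime_and_dvd hne
      have hr' : Prime (r : ℤ) := Nat.prime_iff_prime_int.1 hr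
      have ra : (r : ℤ) ∣ a := (Int.natCast_dvd_natCast.2 hrd).trans (Int.gcd_dvd_left ..)
      have rx : (r : ℤ) ∣ x := (Int.natCast_dvd_natCast.2 hrd).trans (Int.gcd_dvd_right ..)
      have rb : (r : ℤ) ∣ 2 ^ 2 * b ^ 2 := by
        rw [eq_sub_of_add_eq e]
        exact dvd_sub (ra.mul_right _) (rx.mul_right _)
      rcases hr'.dvd_or_dvd rb with h4 | h4
      · have h5 := hr'.dvd_of_dvd_pow h4
        exact haodd ((hr'.dvd_prime_iff_associated Int.prime_two).1 h5 |>.symm.dvd.trans ra)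
      · exact ncab r hr' ra (hr'.dvd_of_dvd_pow h4)
    have hau : IsUnit a := (cab.pow_right (n := 5)).isUnit_of_dvd' dvd_rfl hax5
    have ha1 : a * a = 1 := Int.isUnit_mul_self hau
    nlinarith

theorem stmt_4 (p : ℤ) (hp : Prime p) (hodd : Odd p)
    (α β γ : ℕ) (hα : 1 ≤ α) :
    ¬ ∃ (x z : ℤ), 0 < x ∧ 0 < z ∧ Int.gcd x z = 1 ∧
      x ^ 10 + 2 ^ (2 * α) * 5 ^ (2 * β) * p ^ (2 * γ) = z ^ 5 := by
  rintro ⟨x, z, hx, hz, hg, h⟩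
  have hxz : IsCoprime x z := Int.isCoprime_iff_gcd_eq_one.2 hg
  by_cases hp5 : p ∣ 5
  · -- Here `p = ±5`: merge its power into that of `5`, and use `3 ^ 0` as the new prime power.
    have hp25 : p ^ 2 = 5 ^ 2 := by
      have ha := (hp.dvd_prime_iff_associated (by norm_num : Prime (5 : ℤ))).1 hp5
      rwa [← Int.natAbs_eq_iff_sq_eq, ← Int.associated_iff_natAbs]
    refine no_solution_of_not_dvd_five 3 Int.prime_three (by norm_num) α (β + γ) 0 hα x z hx hz
      hxz ?_
    rw [← h, pow_mul p, hp25, ← pow_mul]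
    ring
  · refine no_solution_of_not_dvd_five p hp hp5 α β γ hα x z hx hz hxz ?_
    rw [← h]
    ring
end

section
/- Let p be an odd prime with p ≠ 5, α a positive integer, β and γ non-negative integers, and let x and z be odd positive integers with gcd(x, z) = 1 and z > 1 satisfying x^{10} + 2^{2α}·5^{2β}·p^{2γ} = z^5. If β = 0, then z − x^2 = 2^{2α} and z^4 + z^3x^2 + z^2x^4 + zx^6 + x^8 = p^{2γ}; if β ≥ 1, then z − x^2 = 2^{2α}·5^{2β−1} and z^4 + z^3x^2 + z^2x^4 + zx^6 + x^8 = 5·p^{2γ}. -/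
/-!
Put `A = z - x ^ 2` and `S = z ^ 4 + z ^ 3 x ^ 2 + z ^ 2 x ^ 4 + z x ^ 6 + x ^ 8`, so that
`A * S = 2 ^ (2α) * 5 ^ (2β) * p ^ (2γ)`. Expanding `S` in powers of `A` gives
`S = 5 x ^ 8 + 10 x ^ 6 A + 10 x ^ 4 A ^ 2 + 5 x ^ 2 A ^ 3 + A ^ 4`. Hence a common prime factor of
`A` and `S` divides `5`, and `5 ∣ S` forces `5 ∣ A`, in which case `25 ∤ S`.

Since `z > 1`, `S` exceeds `5`, so `S` divides no power of `5` (`not_dvd_five_pow`). As `S` is odd,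
`2 ^ (2α)` divides `A`. If `p ∣ A`, then `S` would be prime to `2 * p` and so divide a power of `5`;
thus `p ∤ A` and `p ^ (2γ)` divides `S`. Only the power `5 ^ (2β)` remains to be distributed, and
`S` receives at most one factor `5`, exactly one if `β ≥ 1`.

The prime `p` is an integer and may be negative; the value `p = -5` is impossible, because then
`S` would divide a power of `5`.
-/

/-- The cofactor `S` of `z - x ^ 2` in `z ^ 5 - x ^ 10`. -/
def cofactor (x z : ℤ) : ℤ := z ^ 4 + z ^ 3 * x ^ 2 + z ^ 2 * x ^ 4 + z * x ^ 6 + x ^ 8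

lemma cofactor_eq (x z : ℤ) : cofactor x z = 5 * x ^ 8 + (z - x ^ 2) *
    (10 * x ^ 6 + 10 * x ^ 4 * (z - x ^ 2) + 5 * x ^ 2 * (z - x ^ 2) ^ 2 + (z - x ^ 2) ^ 3) := by
  unfold cofactor; ring

lemma prime_five_int : Prime (5 : ℤ) := by
  rw [Int.prime_iff_natAbs_prime]; norm_num

lemma not_dvd_of_dvd_sub {q x z : ℤ} (hq : Prime q) (hgcd : IsCoprime x z)
    (hA : q ∣ z - x ^ 2) : ¬ q ∣ x := by
  intro hx
  have hz : q ∣ z := by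
    have := dvd_add hA (dvd_pow hx two_ne_zero)
    simpa using this
  exact hq.not_isUnit (hgcd.isUnit_of_dvd' hx hz)

lemma dvd_five_of_dvd_of_dvd {q x z : ℤ} (hq : Prime q) (hgcd : IsCoprime x z)
    (hA : q ∣ z - x ^ 2) (hS : q ∣ cofactor x z) : q ∣ 5 := by
  rw [cofactor_eq, dvd_add_left (hA.mul_right _)] at hS
  exact (hq.dvd_or_dvd hS).resolve_right
    fun h => not_dvd_of_dvd_sub hq hgcd hA (hq.dvd_of_dvd_pow h)

lemma five_dvd_sub {x z : ℤ} (hS : 5 ∣ cofactor x z) : 5 ∣ z - x ^ 2 := by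
  obtain ⟨k, hk⟩ := hS
  refine prime_five_int.dvd_of_dvd_pow (n := 4) ⟨k - (x ^ 8 + (z - x ^ 2) *
    (2 * x ^ 6 + 2 * x ^ 4 * (z - x ^ 2) + x ^ 2 * (z - x ^ 2) ^ 2)), ?_⟩
  rw [cofactor_eq] at hk
  linear_combination hk

lemma five_dvd_cofactor {x z : ℤ} (hA : 5 ∣ z - x ^ 2) : 5 ∣ cofactor x z := by
  rw [cofactor_eq]
  exact dvd_add (dvd_mul_right _ _) (hA.mul_right _)

lemma not_sq_five_dvd_cofactor {x z : ℤ} (hgcd : IsCoprime x z) : ¬ 5 ^ 2 ∣ cofactor x z := by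
  intro h
  have hA := five_dvd_sub ((dvd_pow_self 5 two_ne_zero).trans h)
  apply not_dvd_of_dvd_sub prime_five_int hgcd hA
  apply prime_five_int.dvd_of_dvd_pow (n := 8)
  obtain ⟨a, ha⟩ := hA
  obtain ⟨k, hk⟩ := h
  rw [cofactor_eq, ha] at hk
  exact ⟨k - a * (2 * x ^ 6 + 10 * x ^ 4 * a + 25 * x ^ 2 * a ^ 2 + 25 * a ^ 3),
    by linarith⟩

lemma five_lt_cofactor {x z : ℤ} (hz1 : 1 < z) : 5 < cofactor x z := by
  have h4 : (2 : ℤ) ^ 4 ≤ z ^ 4 := pow_le_pow_left₀ (by norm_num) (by lia) 4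
  have hz : 0 < z := by lia
  have : 0 ≤ z ^ 3 * x ^ 2 + z ^ 2 * x ^ 4 + z * x ^ 6 + x ^ 8 := by positivity
  unfold cofactor
  linarith

/-- A positive divisor of a power of `5` that is not divisible by `25` is `1` or `5`. -/
lemma eq_one_or_five {s : ℤ} (hs : 0 < s) {n : ℕ} (h : s ∣ 5 ^ n) (h25 : ¬ 5 ^ 2 ∣ s) :
    s = 1 ∨ s = 5 := by
  obtain ⟨k, -, hk⟩ := (dvd_prime_pow prime_five_int n).1 h
  have hk' : s = 5 ^ k := by
    have := Int.natAbs_eq_iff_associated.2 hk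
    have h5 : (0 : ℤ) < 5 ^ k := by positivity
    lia
  have : k < 2 := by
    by_contra hlt
    exact h25 (hk' ▸ pow_dvd_pow 5 (by lia))
  interval_cases k
  · left; simpa using hk'
  · right; simpa using hk'

lemma not_dvd_five_pow {x z : ℤ} (hz1 : 1 < z) (hgcd : IsCoprime x z) (n : ℕ) :
    ¬ cofactor x z ∣ 5 ^ n := by
  intro h
  have h5 := five_lt_cofactor (x := x) hz1
  rcases eq_one_or_five (by lia) h (not_sq_five_dvd_cofactor hgcd) with h | h <;> lia

theorem stmt_5 (p : ℤ) (hp : Prime p) (hpodd : Odd p) (hp5 : p ≠ 5)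
    (α β γ : ℕ) (hα : 1 ≤ α) (x z : ℤ) (hx : 0 < x) (hz : 0 < z)
    (hxodd : Odd x) (hzodd : Odd z) (hgcd : Int.gcd x z = 1) (hz1 : 1 < z)
    (h : x ^ 10 + 2 ^ (2 * α) * 5 ^ (2 * β) * p ^ (2 * γ) = z ^ 5) :
    (β = 0 →
      z - x ^ 2 = 2 ^ (2 * α) ∧
      z ^ 4 + z ^ 3 * x ^ 2 + z ^ 2 * x ^ 4 + z * x ^ 6 + x ^ 8 = p ^ (2 * γ)) ∧
    (1 ≤ β →
      z - x ^ 2 = 2 ^ (2 * α) * 5 ^ (2 * β - 1) ∧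
      z ^ 4 + z ^ 3 * x ^ 2 + z ^ 2 * x ^ 4 + z * x ^ 6 + x ^ 8 = 5 * p ^ (2 * γ)) := by
  have hco : IsCoprime x z := Int.isCoprime_iff_gcd_eq_one.2 hgcd
  change (_ → _ ∧ cofactor x z = _) ∧ (_ → _ ∧ cofactor x z = _)
  have hS5 := five_lt_cofactor (x := x) hz1
  have hprod : (z - x ^ 2) * cofactor x z = 2 ^ (2 * α) * 5 ^ (2 * β) * p ^ (2 * γ) := by
    unfold cofactor; linear_combination -h
  have hSodd : Odd (cofactor x z) := by
    unfold cofactor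
    simp [Int.odd_add, Int.odd_pow, hxodd, hzodd, ← Int.not_odd_iff_even]
  have hS2 : IsCoprime (cofactor x z) (2 ^ (2 * α)) := by
    obtain ⟨k, hk⟩ := hSodd
    exact IsCoprime.pow_right ⟨1, -k, by lia⟩
  have hSdvd : cofactor x z ∣ 5 ^ (2 * β) * p ^ (2 * γ) :=
    hS2.dvd_of_dvd_mul_left ⟨z - x ^ 2, by linear_combination -hprod⟩
  have hpm5 : p ≠ -5 := by
    rintro rfl
    refine not_dvd_five_pow hz1 hco (2 * β + 2 * γ) ?_
    rwa [(even_two_mul γ).neg_pow, ← pow_add] at hSdvd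
  have hp_five : ¬ p ∣ 5 := by
    intro hd
    have := Int.natAbs_eq_iff_associated.2 (hp.associated_of_dvd prime_five_int hd)
    lia
  have hpA : ¬ p ∣ z - x ^ 2 := by
    intro hA
    have hpS : ¬ p ∣ cofactor x z := fun hS => hp_five (dvd_five_of_dvd_of_dvd hp hco hA hS)
    have hc : IsCoprime (cofactor x z) (p ^ (2 * γ)) :=
      ((hp.coprime_iff_not_dvd).2 hpS).symm.pow_right
    exact not_dvd_five_pow hz1 hco _ (hc.dvd_of_dvd_mul_right hSdvd)
  have hApow : IsCoprime (p ^ (2 * γ)) (z - x ^ 2) := ((hp.coprime_iff_not_dvd).2 hpA).pow_left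
  obtain ⟨s, hs⟩ : p ^ (2 * γ) ∣ cofactor x z :=
    hApow.dvd_of_dvd_mul_left ⟨2 ^ (2 * α) * 5 ^ (2 * β), by linear_combination hprod⟩
  obtain ⟨a, ha⟩ : 2 ^ (2 * α) ∣ z - x ^ 2 :=
    hS2.symm.dvd_of_dvd_mul_right ⟨5 ^ (2 * β) * p ^ (2 * γ), by linear_combination hprod⟩
  have hppos : 0 < p ^ (2 * γ) := (even_two_mul γ).pow_pos hp.ne_zero
  have hspos : 0 < s := pos_of_mul_pos_right (by lia : 0 < p ^ (2 * γ) * s) hppos.le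
  have has : a * s = 5 ^ (2 * β) := by
    have h2 : (2 : ℤ) ^ (2 * α) * p ^ (2 * γ) ≠ 0 := by positivity
    apply mul_left_cancel₀ h2
    rw [hs, ha] at hprod
    linear_combination hprod
  have hs25 : ¬ 5 ^ 2 ∣ s := fun hd =>
    not_sq_five_dvd_cofactor hco (hs ▸ hd.mul_left _)
  have hs15 := eq_one_or_five hspos (n := 2 * β) ⟨a, by linear_combination -has⟩ hs25
  constructor
  · rintro rfl
    have hs1 : s = 1 := by
      rcases hs15 with h1 | h1
      · exact h1
      · rw [h1] at has; simp at has; lia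
    subst hs1
    simp at has hs
    exact ⟨by simpa [has] using ha, hs⟩
  · intro hβ
    have hpow : (5 : ℤ) ^ (2 * β) = 5 ^ (2 * β - 1) * 5 := by
      rw [← pow_succ]; congr 1; lia
    -- If `s = 1`, all factors `5` lie in `A`, and then `5 ∣ S` after all.
    have hs5 : s = 5 := by
      rcases hs15 with h1 | h1
      · exfalso
        subst h1
        have hA : 5 ∣ z - x ^ 2 :=
          ha ▸ Dvd.dvd.mul_left ⟨5 ^ (2 * β - 1), by linear_combination has + hpow⟩ _
        have hS := five_dvd_cofactor hA
        rw [hs, mul_one] at hS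
        have h5p := prime_five_int.dvd_of_dvd_pow hS
        exact hp_five ((prime_five_int.associated_of_dvd hp h5p).symm.dvd)
      · exact h1
    subst hs5
    have ha' : a = 5 ^ (2 * β - 1) := by lia
    exact ⟨by rw [ha, ha'], by rw [hs, mul_comm]⟩
end

section
/- There are no integers x, α, γ, p with x odd, α ≥ 1, γ ≥ 0, and p an odd prime, satisfying p^{2γ} = 5x^8 + 2^{2α+1}·5·x^6 + 2^{4α+1}·5·x^4 + 2^{6α}·5·x^2 + 2^{8α}. -/
/-!
For odd `x` and `α ≥ 1`, the coefficients `2 ^ (2α+1)`, `2 ^ (4α+1)`, `2 ^ (6α)`, `2 ^ (8α)` are all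
divisible by `8` and `x ^ 8 ≡ 1 (mod 8)`. The right-hand side is therefore `≡ 5 (mod 8)`, which is
not a square modulo `8`, whereas the left-hand side is the square of `p ^ γ`.
-/

theorem stmt_6 :
    ¬ ∃ (x p : ℤ) (α γ : ℕ), Odd x ∧ 1 ≤ α ∧ Prime p ∧ Odd p ∧
      p ^ (2 * γ) = 5 * x ^ 8 + 2 ^ (2 * α + 1) * 5 * x ^ 6 +
        2 ^ (4 * α + 1) * 5 * x ^ 4 + 2 ^ (6 * α) * 5 * x ^ 2 + 2 ^ (8 * α) := by
  rintro ⟨x, p, α, γ, hx, hα, -, -, h⟩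
  have hpow : ∀ k : ℕ, 3 ≤ k → (2 : ZMod 8) ^ k = 0 := by
    intro k hk
    obtain ⟨m, rfl⟩ := Nat.exists_eq_add_of_le hk
    rw [pow_add, show (2 : ZMod 8) ^ 3 = 0 by decide, zero_mul]
  obtain ⟨m, rfl⟩ := hx
  have h8 := congrArg (Int.cast : ℤ → ZMod 8) h
  push_cast at h8
  rw [hpow (2 * α + 1) (by omega), hpow (4 * α + 1) (by omega), hpow (6 * α) (by omega),
    hpow (8 * α) (by omega), mul_comm 2 γ, pow_mul] at h8
  have key : ∀ a b : ZMod 8, a ^ 2 ≠ 5 * (2 * b + 1) ^ 8 := by decide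
  exact key _ _ (by simpa using h8)
end

section
/- Let p be an odd prime with p ≠ 5, α a positive integer, and β and γ non-negative integers. Let u and v be nonzero coprime integers with u odd and v even such that 2^α·5^β·p^γ = v·(v^4 − 10u^2v^2 + 5u^4), and suppose 5 divides v. Then γ ≥ 1 and there exists ε ∈ {1, −1} such that v = ε·2^α·5^{β−1} and v^4 − 10u^2v^2 + 5u^4 = ε·5·p^γ. -/
/-!
Write `v = 5w` and `v⁴ - 10u²v² + 5u⁴ = 5g` with `g = u⁴ - 50u²w² + 125w⁴`. Then `g` is coprime to
`2`, `5` and `v`, so it divides `p ^ γ`, and `p ^ γ` divides `g` as soon as `p ∣ g`. The only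
obstruction is `g = ±1`. Since `g ≡ 1 (mod 4)`, this means `g = 1`, and with `w = 2t` it reads
`(u² - 25w²)² = 1 + 8000t⁴`. By infinite descent the equation `x² = 1 + 8000t⁴` forces `t = 0`
(`sq_eq_one_add`): splitting `x² - 1 = (x - 1)(x + 1)` into coprime factors gives
`b⁴ = 1 + 2000a⁴` with `t⁴ = a⁴b⁴`; splitting `b⁴ - 1 = (b² - 1)(b² + 1)` gives `d⁴ = 1 + 500c⁴`
with `a⁴ = c⁴d⁴`; and `c` is even, so `d²` is a smaller solution of the original equation.
The integer `p` may be negative, even `-5`; the argument never uses its sign, and `p ∣ g`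
excludes `p = -5`.
-/

lemma pow_four_mod (a : ℤ) : a ^ 4 % 16 = 0 ∧ a % 2 = 0 ∨ a ^ 4 % 16 = 1 ∧ a % 2 = 1 := by
  have h : a % 16 = 0 ∨ a % 16 = 1 ∨ a % 16 = 2 ∨ a % 16 = 3 ∨ a % 16 = 4 ∨ a % 16 = 5 ∨
    a % 16 = 6 ∨ a % 16 = 7 ∨ a % 16 = 8 ∨ a % 16 = 9 ∨ a % 16 = 10 ∨ a % 16 = 11 ∨
    a % 16 = 12 ∨ a % 16 = 13 ∨ a % 16 = 14 ∨ a % 16 = 15 := by omega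
  rcases h with h | h | h | h | h | h | h | h | h | h | h | h | h | h | h | h <;>
    simp [pow_succ, Int.mul_emod, h] <;> omega

/-- Up to sign, coprime factors of a fourth power are fourth powers. -/
lemma coprime_mul_eq_pow_four {r s t : ℤ} (hc : IsCoprime r s) (h : r * s = t ^ 4) :
    ∃ a : ℤ, r = a ^ 4 ∨ r = -a ^ 4 := by
  obtain ⟨a, ha⟩ := exists_associated_pow_of_mul_eq_pow' hc h
  refine ⟨a, ?_⟩
  rcases Int.associated_iff.1 ha with h | h
  · left; exact h.symm
  · right; omega

lemma coprime_mul_eq_of_dvd {r s t : ℤ} (hc : IsCoprime r s) (h : r * s = 125 * t ^ 4)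
    (h5 : (5 : ℤ) ∣ r) :
    ∃ a b : ℤ, (r = 125 * a ^ 4 ∨ r = -(125 * a ^ 4)) ∧ (s = b ^ 4 ∨ s = -b ^ 4) := by
  have h5s : IsCoprime (125 : ℤ) s := by
    have : IsCoprime ((5 : ℤ) ^ 3) s := (hc.of_isCoprime_of_dvd_left h5).pow_left
    norm_num at this
    exact this
  obtain ⟨r', rfl⟩ : (125 : ℤ) ∣ r := h5s.dvd_of_dvd_mul_right ⟨_, h⟩
  have hc' : IsCoprime r' s := hc.of_mul_left_right
  have h' : r' * s = t ^ 4 := by linarith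
  obtain ⟨a, ha⟩ := coprime_mul_eq_pow_four hc' h'
  obtain ⟨b, hb⟩ := coprime_mul_eq_pow_four hc'.symm ((mul_comm _ _).trans h')
  exact ⟨a, b, by omega, hb⟩

/-- Coprime factors of `125 * t ^ 4` are, up to signs and order, `125 * a ^ 4` and `b ^ 4`. -/
lemma coprime_mul_eq {r s t : ℤ} (hc : IsCoprime r s) (h : r * s = 125 * t ^ 4) :
    ∃ a b : ℤ, ((r = 125 * a ^ 4 ∨ r = -(125 * a ^ 4)) ∧ (s = b ^ 4 ∨ s = -b ^ 4)) ∨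
      ((s = 125 * b ^ 4 ∨ s = -(125 * b ^ 4)) ∧ (r = a ^ 4 ∨ r = -a ^ 4)) := by
  have h5 : (5 : ℤ) ∣ r * s := ⟨25 * t ^ 4, by linarith⟩
  rcases prime_five_int.dvd_or_dvd h5 with h5 | h5
  · obtain ⟨a, b, hab⟩ := coprime_mul_eq_of_dvd hc h h5
    exact ⟨a, b, Or.inl hab⟩
  · obtain ⟨b, a, hab⟩ := coprime_mul_eq_of_dvd hc.symm ((mul_comm _ _).trans h) h5
    exact ⟨a, b, Or.inr hab⟩

/-- First half of the descent: with `x = 32r + 1`, the coprime factors `r` and `16r + 1` multiply to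
`125t⁴`, and reduction modulo `16` leaves only `r = 125a⁴`, `16r + 1 = b⁴`. -/
lemma descent_first {x t : ℤ} (ht : t ≠ 0) (h : x ^ 2 = 1 + 8000 * t ^ 4) :
    ∃ a b : ℤ, b ^ 4 = 1 + 2000 * a ^ 4 ∧ t ^ 4 = a ^ 4 * b ^ 4 := by
  -- The sign of `x` is free, so `x ≡ 1 (mod 4)` may be assumed.
  wlog hx : x % 4 = 1 generalizing x
  · have hx' : x % 4 = 0 ∨ x % 4 = 2 ∨ x % 4 = 3 := by omega
    have hm : x * x % 4 = 1 := by rw [← sq, h]; omega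
    refine this (x := -x) (by rw [neg_sq, h]) ?_
    rcases hx' with h' | h' | h' <;> simp [Int.mul_emod, h'] at hm
    omega
  obtain ⟨m, rfl⟩ : ∃ m, x = 4 * m + 1 := ⟨x / 4, by omega⟩
  have hm : m * (2 * m + 1) = 1000 * t ^ 4 := by linarith
  have h8 : (8 : ℤ) ∣ m := by
    have hc : IsCoprime (8 : ℤ) (2 * m + 1) := by
      have : IsCoprime ((2 : ℤ) ^ 3) (2 * m + 1) := IsCoprime.pow_left ⟨-m, 1, by ring⟩
      norm_num at this
      exact this
    exact hc.dvd_of_dvd_mul_right ⟨125 * t ^ 4, by linarith⟩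
  obtain ⟨r, rfl⟩ := h8
  have hrs : r * (16 * r + 1) = 125 * t ^ 4 := by linarith
  have ht4 : 0 < t ^ 4 := by positivity
  obtain ⟨a, b, ⟨hr, hs⟩ | ⟨hs, hr⟩⟩ := coprime_mul_eq ⟨-16, 1, by ring⟩ hrs
  · have hb := pow_four_mod b
    have hb0 : 0 ≤ b ^ 4 := by positivity
    have ha0 : 0 ≤ a ^ 4 := by positivity
    have hs' : 16 * r + 1 = b ^ 4 := by omega
    have hr' : r = 125 * a ^ 4 := by omega
    refine ⟨a, b, by omega, ?_⟩
    rw [hs', hr'] at hrs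
    linarith
  · have hb := pow_four_mod b
    omega

/-- Second half of the descent: with `y² = 8r + 1`, the coprime factors `r ≥ 0` and `4r + 1` multiply
to `125a⁴`. Modulo `16` the only possibility is `r = 125(2c)⁴`, `4r + 1 = d⁴`, so that
`d²` solves the equation of `descent_first` again. -/
lemma descent_second {a y : ℤ} (ha : a ≠ 0) (h : y ^ 4 = 1 + 2000 * a ^ 4) :
    ∃ c d : ℤ, d ^ 4 = 1 + 8000 * c ^ 4 ∧ a ^ 4 = 16 * c ^ 4 * d ^ 4 := by
  have hy : y % 2 = 1 := by have := pow_four_mod y; omega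
  obtain ⟨r, hr⟩ : ∃ r, y ^ 2 = 8 * r + 1 := by
    have h8 := Int.eight_dvd_sq_sub_one_of_odd (Int.odd_iff.2 hy)
    exact ⟨y ^ 2 / 8, by omega⟩
  have h2 : (8 * r + 1) ^ 2 = 1 + 2000 * a ^ 4 := by rw [← hr, ← h]; ring
  have ha4 : 0 < a ^ 4 := by positivity
  have hrs : r * (4 * r + 1) = 125 * a ^ 4 := by linarith
  have hr0 : 0 ≤ r := by have := sq_nonneg y; omega
  obtain ⟨c, d, ⟨hr, hs⟩ | ⟨hs, hr⟩⟩ := coprime_mul_eq ⟨-4, 1, by ring⟩ hrs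
  · have hd := pow_four_mod d
    have hc := pow_four_mod c
    have hd0 : 0 ≤ d ^ 4 := by positivity
    have hc0 : 0 ≤ c ^ 4 := by positivity
    have hs' : 4 * r + 1 = d ^ 4 := by omega
    have hr' : r = 125 * c ^ 4 := by omega
    have hc2 : c % 2 = 0 := by omega
    obtain ⟨e, rfl⟩ : ∃ e, c = 2 * e := ⟨c / 2, by omega⟩
    rw [mul_pow] at hr'
    refine ⟨e, d, by omega, ?_⟩
    rw [hs', hr'] at hrs
    linarith
  · have hd := pow_four_mod d
    have hc := pow_four_mod c
    have hd0 : 0 ≤ d ^ 4 := by positivity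
    have hc0 : 0 ≤ c ^ 4 := by positivity
    omega

/-- The equation `x² = 1 + 8000t⁴` has only the trivial solutions, by infinite descent on `|t|`. -/
lemma sq_eq_one_add (x t : ℤ) (h : x ^ 2 = 1 + 8000 * t ^ 4) : t = 0 := by
  induction hn : t.natAbs using Nat.strong_induction_on generalizing x t with
  | _ n ih =>
    by_contra ht
    obtain ⟨a, b, hb, hab⟩ := descent_first ht h
    have ht4 : 0 < t ^ 4 := by positivity
    have ha : a ≠ 0 := by rintro rfl; simp at hab; omega
    have ha4 : 0 < a ^ 4 := by positivity
    obtain ⟨c, d, hd, hcd⟩ := descent_second ha hb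
    have hc : c ≠ 0 := by rintro rfl; simp at hcd; omega
    have hc4 : 0 < c ^ 4 := by positivity
    have hb1 : 1 ≤ b ^ 4 := by omega
    have hd1 : 1 ≤ d ^ 4 := by omega
    have hlt : c ^ 4 < t ^ 4 := by nlinarith
    have hlt' : c.natAbs < t.natAbs := by
      rw [Int.natAbs_lt_iff_sq_lt]
      exact lt_of_pow_lt_pow_left₀ 2 (sq_nonneg t) (by linarith [pow_mul c 2 2, pow_mul t 2 2])
    exact hc (ih c.natAbs (hn ▸ hlt') (d ^ 2) c (by rw [← hd]; ring) rfl)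

theorem stmt_9 (p : ℤ) (hp : Prime p) (hpodd : Odd p) (hp5 : p ≠ 5)
    (α β γ : ℕ) (hα : 1 ≤ α) (u v : ℤ) (hu0 : u ≠ 0) (hv0 : v ≠ 0)
    (huv : IsCoprime u v) (huodd : Odd u) (hveven : Even v)
    (h : 2 ^ α * 5 ^ β * p ^ γ = v * (v ^ 4 - 10 * u ^ 2 * v ^ 2 + 5 * u ^ 4))
    (h5v : (5 : ℤ) ∣ v) :
    1 ≤ γ ∧ ∃ ε : ℤ, (ε = 1 ∨ ε = -1) ∧
      v = ε * 2 ^ α * 5 ^ (β - 1) ∧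
      v ^ 4 - 10 * u ^ 2 * v ^ 2 + 5 * u ^ 4 = ε * 5 * p ^ γ := by
  obtain ⟨t, rfl⟩ : ∃ t, v = 10 * t := ⟨v / 10, by have := hveven.two_dvd; omega⟩
  have ht0 : t ≠ 0 := by rintro rfl; simp at hv0
  obtain ⟨g, hg⟩ : ∃ g, g = u ^ 4 - 200 * u ^ 2 * t ^ 2 + 2000 * t ^ 4 := ⟨_, rfl⟩
  have hf : (10 * t) ^ 4 - 10 * u ^ 2 * (10 * t) ^ 2 + 5 * u ^ 4 = 5 * g := by rw [hg]; ring
  rw [hf] at h ⊢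
  have hg4 : g % 4 = 1 := by
    have := pow_four_mod u
    have := Int.odd_iff.1 huodd
    rw [mul_assoc] at hg
    omega
  have hg1 : g ≠ 1 := fun h1 =>
    ht0 (sq_eq_one_add (u ^ 2 - 100 * t ^ 2) t (by rw [h1] at hg; linarith))
  have hgu : ¬ IsUnit g := by
    rw [Int.isUnit_iff]; omega
  have hu10 : IsCoprime (u ^ 4) (10 * t) := huv.pow_left
  have hcop : IsCoprime g (10 * t) := by
    have : g = u ^ 4 + (10 * t) * (20 * t ^ 3 * 10 - 20 * u ^ 2 * t) := by rw [hg]; ring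
    rw [this]
    exact hu10.add_mul_left_left _
  have hg2 : IsCoprime g 2 := hcop.of_isCoprime_of_dvd_right ⟨5 * t, by ring⟩
  have hg5 : IsCoprime g 5 := hcop.of_isCoprime_of_dvd_right ⟨2 * t, by ring⟩
  have hgp : g ∣ p ^ γ :=
    (hg2.pow_right.mul_right hg5.pow_right).dvd_of_dvd_mul_left
      ⟨10 * t * 5, by rw [h]; ring⟩
  have hpg : p ∣ g := by
    obtain ⟨i, -, hi⟩ := (dvd_prime_pow hp γ).1 hgp
    rcases Nat.eq_zero_or_pos i with rfl | hi0
    · exact absurd (by simpa using hi) (mt associated_one_iff_isUnit.1 hgu)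
    · exact (dvd_pow_self p hi0.ne').trans hi.symm.dvd
  have hγ : 1 ≤ γ := by
    by_contra h0
    obtain rfl : γ = 0 := by omega
    exact hgu (isUnit_of_dvd_one (by simpa using hgp))
  have hpv : IsCoprime (p ^ γ) (10 * t * 5) :=
    ((hcop.mul_right hg5).of_isCoprime_of_dvd_left hpg).pow_left
  have hpg' : p ^ γ ∣ g :=
    hpv.dvd_of_dvd_mul_left ⟨2 ^ α * 5 ^ β, by linarith⟩
  have hpγ : p ^ γ ≠ 0 := pow_ne_zero _ hp.ne_zero
  obtain ⟨ε, hε, hgε⟩ : ∃ ε : ℤ, (ε = 1 ∨ ε = -1) ∧ g = ε * p ^ γ := by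
    rcases Int.associated_iff.1 (associated_of_dvd_dvd hgp hpg') with h | h
    · exact ⟨1, by simp, by simpa using h⟩
    · exact ⟨-1, by simp, by simpa using h⟩
  refine ⟨hγ, ε, hε, ?_, by rw [hgε]; ring⟩
  have hε2 : ε * ε = 1 := by rcases hε with rfl | rfl <;> norm_num
  have h1 : 2 ^ α * 5 ^ β = 5 * (10 * t * ε) := by
    apply mul_right_cancel₀ hpγ
    rw [h, hgε]; ring
  rcases β with _ | b
  · have : (5 : ℤ) ∣ 2 ^ α := ⟨10 * t * ε, by simpa using h1⟩
    have := prime_five_int.dvd_of_dvd_pow this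
    omega
  · have h2 : 2 ^ α * 5 ^ b = 10 * t * ε := by
      rw [pow_succ] at h1; linarith
    rw [Nat.add_sub_cancel, mul_assoc, h2]
    linear_combination (-(10 * t)) * hε2
end

section
/- Let p be an odd prime with p ≠ 5, α a positive integer, and β and γ non-negative integers. Let u and v be nonzero coprime integers with u odd and v even such that 2^α·5^β·p^γ = v·(v^4 − 10u^2v^2 + 5u^4), and suppose 5 does not divide v. Then β = 0 and there exists ε ∈ {1, −1} such that v = ε·2^α and v^4 − 10u^2v^2 + 5u^4 = ε·p^γ. -/
/-!
Write `W = v ^ 4 - 10 * u ^ 2 * v ^ 2 + 5 * u ^ 4`. As `5 ∤ v`, also `5 ∤ W`, so `β = 0`.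
Since `u` is odd and `v` is even, `W ≡ 5 (mod 8)`; in particular `W` is odd and is not a unit.
Since `u` and `5` are prime to `v`, so is `W`. Hence `2 ^ α ∣ v`, and `p ^ γ` divides `v` or `W`.
In the first case `W` would be a unit; in the second `v = ε * 2 ^ α` and `W = ε * p ^ γ` with
`ε` a unit.
-/

theorem stmt_10 (p : ℤ) (hp : Prime p) (hpodd : Odd p) (hp5 : p ≠ 5)
    (α β γ : ℕ) (hα : 1 ≤ α) (u v : ℤ) (hu0 : u ≠ 0) (hv0 : v ≠ 0)
    (huv : IsCoprime u v) (huodd : Odd u) (hveven : Even v)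
    (h : 2 ^ α * 5 ^ β * p ^ γ = v * (v ^ 4 - 10 * u ^ 2 * v ^ 2 + 5 * u ^ 4))
    (h5v : ¬ (5 : ℤ) ∣ v) :
    β = 0 ∧ ∃ ε : ℤ, (ε = 1 ∨ ε = -1) ∧
      v = ε * 2 ^ α ∧
      v ^ 4 - 10 * u ^ 2 * v ^ 2 + 5 * u ^ 4 = ε * p ^ γ := by
  have h5 : Prime (5 : ℤ) := by norm_num
  have h5W : ¬ (5 : ℤ) ∣ v ^ 4 - 10 * u ^ 2 * v ^ 2 + 5 * u ^ 4 := by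
    intro hd
    apply h5v
    apply h5.dvd_of_dvd_pow (n := 4)
    have e : v ^ 4 = (v ^ 4 - 10 * u ^ 2 * v ^ 2 + 5 * u ^ 4)
        + 5 * (2 * u ^ 2 * v ^ 2 - u ^ 4) := by ring
    rw [e]
    exact dvd_add hd (dvd_mul_right _ _)
  have hW8 : ∃ k : ℤ, v ^ 4 - 10 * u ^ 2 * v ^ 2 + 5 * u ^ 4 = 8 * k + 5 := by
    obtain ⟨a, ha⟩ := huodd
    obtain ⟨b, hb⟩ := hveven
    refine ⟨2 * b ^ 4 - 5 * u ^ 2 * b ^ 2 + 5 * (2 * a ^ 4 + 4 * a ^ 3 + 3 * a ^ 2 + a), ?_⟩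
    subst ha hb
    ring
  have hWv : IsCoprime (v ^ 4 - 10 * u ^ 2 * v ^ 2 + 5 * u ^ 4) v := by
    have h1 : IsCoprime (5 * u ^ 4) v :=
      ((h5.coprime_iff_not_dvd).2 h5v).mul_left huv.pow_left
    have e : v ^ 4 - 10 * u ^ 2 * v ^ 2 + 5 * u ^ 4
        = 5 * u ^ 4 + v * (v ^ 3 - 10 * u ^ 2 * v) := by ring
    rw [e]
    exact h1.add_mul_left_left _
  generalize v ^ 4 - 10 * u ^ 2 * v ^ 2 + 5 * u ^ 4 = W at *
  obtain ⟨k, hk⟩ := hW8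
  have hWunit : ¬ IsUnit W := by
    intro hu
    rcases Int.isUnit_iff.1 hu with h1 | h1 <;> omega
  have hβ : β = 0 := by
    by_contra hne
    have hd : (5 : ℤ) ∣ v * W := by
      rw [← h]
      exact ((dvd_pow_self 5 hne).mul_left _).mul_right _
    exact (h5.dvd_or_dvd hd).elim h5v h5W
  refine ⟨hβ, ?_⟩
  subst hβ
  rw [pow_zero, mul_one] at h
  have h2W : IsCoprime (2 ^ α) W :=
    IsCoprime.pow_left ⟨-(4 * k + 2), 1, by rw [hk]; ring⟩
  have h2v : 2 ^ α ∣ v := h2W.dvd_of_dvd_mul_right (h ▸ dvd_mul_right _ _)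
  obtain ⟨c, rfl⟩ := h2v
  have h2 : (2 : ℤ) ^ α ≠ 0 := by positivity
  have hc : p ^ γ = c * W := mul_left_cancel₀ h2 (by rw [h]; ring)
  have hcW : IsCoprime W c := hWv.of_mul_right_right
  by_cases hpc : p ∣ c
  · exfalso
    have hpW : IsCoprime p W := (hcW.of_isCoprime_of_dvd_right hpc).symm
    -- Here `W` divides `p ^ γ` and is prime to it.
    exact hWunit ((hpW.pow_left (m := γ)).isUnit_of_dvd' (hc ▸ dvd_mul_left _ _) dvd_rfl)
  · have hcu : IsUnit c := by
      have hpc' : IsCoprime p c := (hp.coprime_iff_not_dvd).2 hpc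
      exact (hpc'.pow_left (m := γ)).isUnit_of_dvd' (hc ▸ dvd_mul_right _ _) dvd_rfl
    refine ⟨c, Int.isUnit_iff.1 hcu, mul_comm _ _, ?_⟩
    rw [hc, ← mul_assoc, Int.isUnit_mul_self hcu, one_mul]
end

section
/- Let n be an odd integer with n ≥ 3, and let x, u, v be integers with u and v nonzero and coprime, 5 dividing u, and x^n = u·(u^4 − 10u^2v^2 + 5v^4). Then there exist nonzero coprime integers A and B such that u = 5^{n−1}·A^n and u^4 − 10u^2v^2 + 5v^4 = 5·B^n. -/
/-!
Write `u = 5 * w` and `F = 125 * w ^ 4 - 50 * w ^ 2 * v ^ 2 + v ^ 4`, so that the quartic factor is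
`5 * F` and `x ^ n = (25 * w) * F`. Since `F` is congruent to `v ^ 4` modulo `5 * w = u`, it is
coprime to `25 * w`. As `n` is odd, both factors are `n`-th powers, say `25 * w = a ^ n` and
`F = B ^ n`; then `5 ∣ a`, and `A = a / 5` gives `5 * u = 5 ^ n * A ^ n`.
-/

theorem stmt_11 (n : ℕ) (hn : Odd n) (hn3 : 3 ≤ n) (x u v : ℤ)
    (hu0 : u ≠ 0) (hv0 : v ≠ 0) (huv : IsCoprime u v) (h5u : (5 : ℤ) ∣ u)
    (h : x ^ n = u * (u ^ 4 - 10 * u ^ 2 * v ^ 2 + 5 * v ^ 4)) :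
    ∃ A B : ℤ, A ≠ 0 ∧ B ≠ 0 ∧ IsCoprime A B ∧
      u = 5 ^ (n - 1) * A ^ n ∧
      u ^ 4 - 10 * u ^ 2 * v ^ 2 + 5 * v ^ 4 = 5 * B ^ n := by
  obtain ⟨w, rfl⟩ := h5u
  obtain ⟨F, hF⟩ : ∃ F : ℤ, F = v ^ 4 + (5 * w) * (25 * w ^ 3 - 10 * w * v ^ 2) := ⟨_, rfl⟩
  have hcop5 : IsCoprime (5 * w) F := by
    rw [hF]
    exact (huv.pow_right (n := 4)).add_mul_left_right _
  have hcop : IsCoprime (25 * w) F :=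
    (hcop5.pow_left (m := 2)).of_isCoprime_of_dvd_left ⟨w, by ring⟩
  have hprod : (25 * w) * F = x ^ n := by rw [h, hF]; ring
  obtain ⟨a, ha⟩ := Int.eq_pow_of_mul_eq_pow_odd_left hcop hn hprod
  obtain ⟨B, hB⟩ := Int.eq_pow_of_mul_eq_pow_odd_right hcop hn hprod
  have hn0 : n ≠ 0 := by omega
  have h5a : (5 : ℤ) ∣ a :=
    (Int.prime_iff_natAbs_prime.mpr (by norm_num)).dvd_of_dvd_pow (n := n)
      (ha ▸ ⟨5 * w, by ring⟩)
  obtain ⟨A, rfl⟩ := h5a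
  have hA : 5 * w = 5 ^ (n - 1) * A ^ n := by
    obtain ⟨m, rfl⟩ : ∃ m, n = m + 1 := ⟨n - 1, by omega⟩
    rw [mul_pow, pow_succ (5 : ℤ) m] at ha
    rw [Nat.add_sub_cancel]
    linarith
  refine ⟨A, B, ?_, ?_, ?_, hA, ?_⟩
  · rintro rfl
    exact hu0 (by rw [hA, zero_pow hn0, mul_zero])
  · rintro rfl
    -- `F = 0` would make `5 * w` a unit.
    rw [hB, zero_pow hn0, isCoprime_zero_right, Int.isUnit_iff] at hcop5
    omega
  · rw [ha, hB] at hcop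
    have h1 := (IsCoprime.pow_iff (by omega) (by omega)).mp hcop
    exact h1.of_isCoprime_of_dvd_left ⟨5, by ring⟩
  · rw [← hB, hF]; ring
end

section
/- Let n be an odd integer with n ≥ 3, and let x, u, v be integers with u and v nonzero and coprime, 5 not dividing u, and x^n = u·(u^4 − 10u^2v^2 + 5v^4). Then there exist nonzero coprime integers A and B such that u = A^n and u^4 − 10u^2v^2 + 5v^4 = B^n. -/
/-!
Modulo `u` the second factor is `5 * v ^ 4`, which is a unit because `u` is prime to both `5`
and `v`. The two factors of `x ^ n` are therefore coprime, and since `n` is odd (so that signs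
are `n`-th powers) each is an `n`-th power. The second factor cannot vanish because it is
congruent to `u ^ 4` modulo `5`.
-/

theorem stmt_12 (n : ℕ) (hn : Odd n) (hn3 : 3 ≤ n) (x u v : ℤ)
    (hu0 : u ≠ 0) (hv0 : v ≠ 0) (huv : IsCoprime u v) (h5u : ¬ (5 : ℤ) ∣ u)
    (h : x ^ n = u * (u ^ 4 - 10 * u ^ 2 * v ^ 2 + 5 * v ^ 4)) :
    ∃ A B : ℤ, A ≠ 0 ∧ B ≠ 0 ∧ IsCoprime A B ∧
      u = A ^ n ∧
      u ^ 4 - 10 * u ^ 2 * v ^ 2 + 5 * v ^ 4 = B ^ n := by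
  have h5 : Prime (5 : ℤ) := Int.prime_iff_natAbs_prime.mpr (by norm_num)
  have hu5 : IsCoprime u 5 := ((Prime.coprime_iff_not_dvd h5).mpr h5u).symm
  have hcop : IsCoprime u (u ^ 4 - 10 * u ^ 2 * v ^ 2 + 5 * v ^ 4) := by
    have key := (hu5.mul_right (huv.pow_right (n := 4))).add_mul_left_right
      (u ^ 3 - 10 * u * v ^ 2)
    have e : u ^ 4 - 10 * u ^ 2 * v ^ 2 + 5 * v ^ 4
        = 5 * v ^ 4 + u * (u ^ 3 - 10 * u * v ^ 2) := by ring
    rw [e]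
    exact key
  have hne : u ^ 4 - 10 * u ^ 2 * v ^ 2 + 5 * v ^ 4 ≠ 0 := by
    intro h0
    exact h5u (h5.dvd_of_dvd_pow (n := 4) ⟨2 * u ^ 2 * v ^ 2 - v ^ 4, by linarith⟩)
  obtain ⟨⟨A, hA⟩, ⟨B, hB⟩⟩ := Int.eq_pow_of_mul_eq_pow_odd hcop hn h.symm
  have hn0 : n ≠ 0 := by omega
  refine ⟨A, B, ?_, ?_, ?_, hA, hB⟩
  · rintro rfl
    exact hu0 (by rw [hA, zero_pow hn0])
  · rintro rfl
    exact hne (by rw [hB, zero_pow hn0])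
  · rw [hB, hA] at hcop
    exact (IsCoprime.pow_iff (by omega) (by omega)).mp hcop
end

section
/- Let n be an odd integer with n ≥ 3 and α a positive integer. Let u and v be nonzero coprime integers with u odd, 5 dividing u, and v = 2^α or v = −2^α, and let B be an integer with u^4 − 10u^2v^2 + 5v^4 = 5·B^n. Then 5 divides u^2 − 5v^2, and setting w = (u^2 − 5v^2)/5, one has B^n + 2^{4α+2} = 5·w^2; moreover B ≡ 5 (mod 8), so in particular B is odd and B ≠ ±1. -/
/-!
Completing the square, `u⁴ - 10u²v² + 5v⁴ = (u² - 5v²)² - 20v⁴`; since `u² - 5v² = 5w`, this gives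
`B ^ n + 4v⁴ = 5w²`, and `v⁴ = 2 ^ (4α)`. As `v` is even and `w` is odd, reduction modulo `8` yields
`B ^ n ≡ 5`. Hence `B` is odd, so `B² ≡ 1 (mod 8)`, and `B ≡ B ^ n ≡ 5 (mod 8)` because `n` is odd.
-/

theorem sq_mod_eight_of_odd {a : ℤ} (ha : Odd a) : a ^ 2 % 8 = 1 := by
  have h := Int.eight_dvd_sq_sub_one_of_odd ha
  omega

theorem stmt_13 (n : ℕ) (hn : Odd n) (hn3 : 3 ≤ n) (α : ℕ) (hα : 1 ≤ α)
    (u v : ℤ) (hu0 : u ≠ 0) (hv0 : v ≠ 0) (huv : IsCoprime u v)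
    (huodd : Odd u) (h5u : (5 : ℤ) ∣ u)
    (hv : v = 2 ^ α ∨ v = -(2 ^ α)) (B : ℤ)
    (hB : u ^ 4 - 10 * u ^ 2 * v ^ 2 + 5 * v ^ 4 = 5 * B ^ n) :
    (5 : ℤ) ∣ (u ^ 2 - 5 * v ^ 2) ∧
      B ^ n + 2 ^ (4 * α + 2) = 5 * ((u ^ 2 - 5 * v ^ 2) / 5) ^ 2 ∧
      B % 8 = 5 ∧ Odd B ∧ B ≠ 1 ∧ B ≠ -1 := by
  obtain ⟨k, rfl⟩ := h5u
  have hw : (5 * k) ^ 2 - 5 * v ^ 2 = 5 * (5 * k ^ 2 - v ^ 2) := by ring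
  have hdiv : ((5 * k) ^ 2 - 5 * v ^ 2) / 5 = 5 * k ^ 2 - v ^ 2 := by
    rw [hw]; exact Int.mul_ediv_cancel_left _ (by norm_num)
  have hv4 : (2 : ℤ) ^ (4 * α + 2) = 4 * v ^ 4 := by
    rcases hv with rfl | rfl <;> ring
  have hmain : B ^ n + 4 * v ^ 4 = 5 * (5 * k ^ 2 - v ^ 2) ^ 2 := by linarith
  have hveven : Even v := by
    have h2 : Even ((2 : ℤ) ^ α) := even_two.pow_of_ne_zero (by omega)
    rcases hv with rfl | rfl
    · exact h2
    · exact h2.neg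
  have hk : Odd k := (Int.odd_mul.mp huodd).2
  have hwodd : Odd (5 * k ^ 2 - v ^ 2) :=
    ((by decide : Odd (5 : ℤ)).mul hk.pow).sub_even (hveven.pow_of_ne_zero two_ne_zero)
  have hw8 : (5 * k ^ 2 - v ^ 2) ^ 2 % 8 = 1 := sq_mod_eight_of_odd hwodd
  have hBn : B ^ n % 8 = 5 := by
    obtain ⟨t, rfl⟩ := hveven
    have h8 : 4 * (t + t) ^ 4 = 8 * (8 * t ^ 4) := by ring
    omega
  have hBodd : Odd B := by
    have h : Odd (B ^ n) := Int.odd_iff.mpr (by omega)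
    exact (Int.odd_pow.mp h).resolve_right (by omega)
  have hB8 : B % 8 = 5 := by
    obtain ⟨m, rfl⟩ := hn
    have hsq : B ^ 2 ≡ 1 [ZMOD 8] := sq_mod_eight_of_odd hBodd
    have h : B ^ (2 * m + 1) ≡ B [ZMOD 8] := by
      simpa [pow_succ, pow_mul] using (hsq.pow m).mul_right B
    exact Eq.trans h.symm hBn
  refine ⟨⟨_, hw⟩, ?_, hB8, hBodd, by omega, by omega⟩
  rw [hdiv, hv4, hmain]
end

section
/- Let n be an odd integer with n ≥ 3, α a positive integer, and k a non-negative integer. Let u and v be nonzero coprime integers with u odd, 5 not dividing u, and v = 2^α·5^k or v = −2^α·5^k, and let B be an integer with u^4 − 10u^2v^2 + 5v^4 = B^n. Then setting w = u^2 − 5v^2, one has B^n + 2^{4α+2}·5^{4k+1} = w^2, w ≡ 1 (mod 4), 3 does not divide w, B is coprime to 10, and gcd(B, w) = 1. -/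
/-!
Write `w = u² - 5v²`. Then `w² = (u⁴ - 10u²v² + 5v⁴) + 20v⁴ = Bⁿ + 20v⁴`, and
`20v⁴ = 2^(4α+2) * 5^(4k+1)` whatever the sign of `v`. The congruences modulo 4 and 3 follow from
`v` being even and prime to 3. Modulo 2 and modulo 5 one has `Bⁿ ≡ u⁴`, so `B` is coprime
to 10. Hence `B` is coprime to `20v⁴ = w² - Bⁿ`, and
therefore to `w`.
-/

theorem stmt_14 (n : ℕ) (hn : Odd n) (hn3 : 3 ≤ n) (α k : ℕ) (hα : 1 ≤ α)
    (u v : ℤ) (hu0 : u ≠ 0) (hv0 : v ≠ 0) (huv : IsCoprime u v)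
    (huodd : Odd u) (h5u : ¬ (5 : ℤ) ∣ u)
    (hv : v = 2 ^ α * 5 ^ k ∨ v = -(2 ^ α * 5 ^ k)) (B : ℤ)
    (hB : u ^ 4 - 10 * u ^ 2 * v ^ 2 + 5 * v ^ 4 = B ^ n) :
    B ^ n + 2 ^ (4 * α + 2) * 5 ^ (4 * k + 1) = (u ^ 2 - 5 * v ^ 2) ^ 2 ∧
      (u ^ 2 - 5 * v ^ 2) % 4 = 1 ∧
      ¬ (3 : ℤ) ∣ (u ^ 2 - 5 * v ^ 2) ∧
      IsCoprime B 10 ∧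
      Int.gcd B (u ^ 2 - 5 * v ^ 2) = 1 := by
  have h20 : 20 * v ^ 4 = 2 ^ (4 * α + 2) * 5 ^ (4 * k + 1) := by
    rcases hv with rfl | rfl <;> ring
  have h1 : B ^ n + 2 ^ (4 * α + 2) * 5 ^ (4 * k + 1) = (u ^ 2 - 5 * v ^ 2) ^ 2 := by
    rw [← h20, ← hB]; ring
  have h2v : (2 : ℤ) ∣ v := by
    have h : (2 : ℤ) ∣ 2 ^ α * 5 ^ k := (dvd_pow_self 2 (by omega)).mul_right _
    rcases hv with rfl | rfl
    · exact h
    · exact h.neg_right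
  have h3v : ¬ (3 : ℤ) ∣ v := by
    have hp : Prime (3 : ℤ) := Int.prime_three
    have h : ¬ (3 : ℤ) ∣ 2 ^ α * 5 ^ k := by
      intro h
      rcases hp.dvd_or_dvd h with h | h
      · have := hp.dvd_of_dvd_pow h
        omega
      · have := hp.dvd_of_dvd_pow h
        omega
    rcases hv with rfl | rfl
    · exact h
    · rwa [dvd_neg]
  have hn0 : n ≠ 0 := by omega
  have p5 : Prime (5 : ℤ) := Int.prime_ofNat_iff.mpr (by norm_num)
  have hB2 : ¬ (2 : ℤ) ∣ B := by
    intro h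
    have h' : (2 : ℤ) ∣ u ^ 4 := by
      have e : u ^ 4 = B ^ n + v * (10 * u ^ 2 * v - 5 * v ^ 3) := by rw [← hB]; ring
      rw [e]
      exact dvd_add (dvd_pow h hn0) (h2v.mul_right _)
    have := Int.prime_two.dvd_of_dvd_pow h'
    obtain ⟨m, rfl⟩ := huodd
    omega
  have hB5 : ¬ (5 : ℤ) ∣ B := by
    intro h
    have h' : (5 : ℤ) ∣ u ^ 4 := by
      have e : u ^ 4 = B ^ n + 5 * (2 * u ^ 2 * v ^ 2 - v ^ 4) := by rw [← hB]; ring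
      rw [e]
      exact dvd_add (dvd_pow h hn0) (dvd_mul_right _ _)
    exact h5u (p5.dvd_of_dvd_pow h')
  have c2 : IsCoprime B 2 := (Int.prime_two.irreducible.coprime_iff_not_dvd.mpr hB2).symm
  have c5 : IsCoprime B 5 := (p5.irreducible.coprime_iff_not_dvd.mpr hB5).symm
  refine ⟨h1, ?_, ?_, ?_, ?_⟩
  · obtain ⟨m, rfl⟩ := huodd
    obtain ⟨t, rfl⟩ := h2v
    have e : (2 * m + 1) ^ 2 - 5 * (2 * t) ^ 2 = 1 + 4 * (m ^ 2 + m - 5 * t ^ 2) := by ring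
    rw [e]
    omega
  · intro h
    -- Modulo 3, `w ≡ u² + v²`, and `v² ≡ 1` while `u²` is `0` or `1`.
    have hv3 : v % 3 = 1 ∨ v % 3 = 2 := by omega
    have hu3 : u % 3 = 0 ∨ u % 3 = 1 ∨ u % 3 = 2 := by omega
    have h' := Int.emod_eq_zero_of_dvd h
    rcases hv3 with a | a <;> rcases hu3 with b | b | b <;>
      simp [pow_two, Int.sub_emod, Int.mul_emod, a, b] at h'
  · have := c2.mul_right c5
    norm_num at this
    exact this
  · rw [← Int.isCoprime_iff_gcd_eq_one]
    have c : IsCoprime B (2 ^ (4 * α + 2) * 5 ^ (4 * k + 1)) := c2.pow_right.mul_right c5.pow_right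
    have c' : IsCoprime B ((u ^ 2 - 5 * v ^ 2) ^ 2) := by
      obtain ⟨m, rfl⟩ := Nat.exists_eq_succ_of_ne_zero hn0
      rw [← h1, Nat.succ_eq_add_one, pow_succ', add_comm]
      exact c.add_mul_left_right _
    exact (IsCoprime.pow_right_iff (by norm_num)).mp c'
end
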